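/- arXiv:1710.08766 — 3 statements merged into one kernel-verified Lean document; each statement's English description precedes it below -/
import Mathlib

section
/- There is a tall ideal I on ℕ which is an Fσ subset of the Cantor space 2^ℕ and which has no Borel selector. -/
open Set

/-- The Cantor space `2^ℕ`: subsets of `ℕ` identified with their characteristic functions. -/
abbrev Cantor : Type := ℕ → Bool

/-- The subset of `ℕ` coded by a point of Cantor space. -/
def toSet (x : Cantor) : Set ℕ := {n | x n = true}

/-- `s ⊑ z` : the finite set `s` is an initial segment of `z ⊆ ℕ`,
i.e. `s = z ∩ {0,1,…,n}` for some `n`. -/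
def InitSeg (s : Finset ℕ) (z : Set ℕ) : Prop := ∃ n : ℕ, (s : Set ℕ) = z ∩ Set.Iic n

/-- `s ⊑ t` for finite sets `s, t`. -/
def InitSegF (s t : Finset ℕ) : Prop := ∃ n : ℕ, s = t ∩ Finset.Iic n

/-- `B` is a front on the set `x ⊆ ℕ`: all members of `B` are subsets of `x`, any two
members of `B` are `⊑`-incomparable, and every infinite subset of `x` has an initial
segment in `B`. -/
def IsFrontOn (B : Set (Finset ℕ)) (x : Set ℕ) : Prop :=
  (∀ s ∈ B, (s : Set ℕ) ⊆ x) ∧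
  (∀ s ∈ B, ∀ t ∈ B, InitSegF s t → s = t) ∧
  (∀ y : Set ℕ, y ⊆ x → y.Infinite → ∃ s ∈ B, InitSeg s y)

/-- `y` is `F`-homogeneous: either every infinite subset of `y` has an initial segment
in `F`, or no finite subset of `y` belongs to `F`. -/
def Homog (F : Set (Finset ℕ)) (y : Set ℕ) : Prop :=
  (∀ z : Set ℕ, z ⊆ y → z.Infinite → ∃ s ∈ F, InitSeg s z) ∨
  (∀ s : Finset ℕ, (s : Set ℕ) ⊆ y → s ∉ F)

/-- `I` is an ideal on `ℕ`: a family of subsets of `ℕ` closed under taking subsets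
and under finite unions. -/
def IsIdeal (I : Set Cantor) : Prop :=
  (∀ x ∈ I, ∀ y : Cantor, toSet y ⊆ toSet x → y ∈ I) ∧
  (∀ x ∈ I, ∀ y ∈ I, (fun n => x n || y n) ∈ I)

/-- `I` is an `Fσ` subset of the Cantor space. -/
def IsFsigma (I : Set Cantor) : Prop :=
  ∃ C : ℕ → Set Cantor, (∀ n, IsClosed (C n)) ∧ I = ⋃ n, C n

/-- A family `C` is tall if every infinite subset of `ℕ` contains an infinite member of `C`. -/
def Tall (C : Set Cantor) : Prop :=
  ∀ x : Cantor, (toSet x).Infinite → ∃ y ∈ C, (toSet y).Infinite ∧ toSet y ⊆ toSet x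

/-- `S` is a Borel selector for the family `C`. -/
def IsSelector (C : Set Cantor) (S : Cantor → Cantor) : Prop :=
  Measurable S ∧ ∀ x : Cantor,
    toSet (S x) ⊆ toSet x ∧ ((toSet x).Infinite → (toSet (S x)).Infinite) ∧ S x ∈ C

/-- A Borel ideal `I` is uniformly selective. -/
def UnifSelective (I : Set Cantor) : Prop :=
  ∃ F : (ℕ → Cantor) → Cantor, Measurable F ∧
    ∀ xs : ℕ → Cantor, (∀ n, xs n ∉ I) → (∀ n, toSet (xs (n + 1)) ⊆ toSet (xs n)) →
      F xs ∉ I ∧ ∀ n ∈ toSet (F xs), toSet (F xs) \ Set.Iic n ⊆ toSet (xs n)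

/-- A Borel ideal `I` is uniformly `p⁺`. -/
def UnifPplus (I : Set Cantor) : Prop :=
  ∃ G : (ℕ → Cantor) → Cantor, Measurable G ∧
    ∀ xs : ℕ → Cantor, (∀ n, xs n ∉ I) → (∀ n, toSet (xs (n + 1)) ⊆ toSet (xs n)) →
      G xs ∉ I ∧ ∀ n, (toSet (G xs) \ toSet (xs n)).Finite

/-- `(t n)_{n∈ℕ}` is a partition of `x` into finite sets. -/
def FinPartition (x : Cantor) (t : ℕ → Cantor) : Prop :=
  (∀ n, (toSet (t n)).Finite) ∧
  (∀ m n, m ≠ n → Disjoint (toSet (t m)) (toSet (t n))) ∧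
  (⋃ n, toSet (t n)) = toSet x

/-- A Borel ideal `I` is uniformly `q⁺`. -/
def UnifQplus (I : Set Cantor) : Prop :=
  ∃ F : Cantor × (ℕ → Cantor) → Cantor, Measurable F ∧
    ∀ (x : Cantor) (t : ℕ → Cantor), x ∉ I → FinPartition x t →
      toSet (F (x, t)) ⊆ toSet x ∧ F (x, t) ∉ I ∧
      ∀ n, (toSet (F (x, t)) ∩ toSet (t n)).Subsingleton

/-- The ideal `I` is `q⁺`. -/
def Qplus (I : Set Cantor) : Prop :=
  ∀ (x : Cantor) (t : ℕ → Cantor), x ∉ I → FinPartition x t →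
    ∃ y : Cantor, toSet y ⊆ toSet x ∧ y ∉ I ∧
      ∀ n, (toSet y ∩ toSet (t n)).Subsingleton

/-- The ideal `I` is selective. -/
def Selective (I : Set Cantor) : Prop :=
  ∀ xs : ℕ → Cantor, (∀ n, xs n ∉ I) → (∀ n, toSet (xs (n + 1)) ⊆ toSet (xs n)) →
    ∃ x : Cantor, x ∉ I ∧ ∀ n ∈ toSet x, toSet x \ Set.Iic n ⊆ toSet (xs n)

/-- The ideal generated by `K`: `x ∈ IdealGen K` iff `x ⊆ y₁ ∪ … ∪ y_n` for some
`y₁, …, y_n ∈ K`. -/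
def IdealGen (K : Set Cantor) : Set Cantor :=
  {x | ∃ l : List Cantor, l ≠ [] ∧ (∀ y ∈ l, y ∈ K) ∧ toSet x ⊆ ⋃ y ∈ l, toSet y}

/-- `↓K = {x : x ⊆ y for some y ∈ K}`. -/
def Down (K : Set Cantor) : Set Cantor := {x | ∃ y ∈ K, toSet x ⊆ toSet y}

/-- `C` is hereditary: closed under taking subsets. -/
def Hereditary (C : Set Cantor) : Prop :=
  ∀ x ∈ C, ∀ y : Cantor, toSet y ⊆ toSet x → y ∈ C

/-- `A ⊆ 2^ℕ` is `Σ¹₂`: the projection of a coanalytic subset of `2^ℕ × ℕ^ℕ`. -/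
def Sigma12 (A : Set Cantor) : Prop :=
  ∃ C : Set (Cantor × (ℕ → ℕ)), MeasureTheory.AnalyticSet Cᶜ ∧
    A = {x | ∃ w : ℕ → ℕ, (x, w) ∈ C}

/-- `A ⊆ 2^ℕ` is `Π¹₂`: the complement of a `Σ¹₂` set. -/
def Pi12 (A : Set Cantor) : Prop := Sigma12 Aᶜ

/-! ### Coding finite sequences -/

/-- Code of the first `n` values of `x`. -/
def codeSeq (x : ℕ → ℕ) : ℕ → ℕ
  | 0 => 0
  | n + 1 => Nat.pair (codeSeq x n) (x n)

/-- Code of the first `n` values of a point of Cantor space. -/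
def codeCan (a : Cantor) (n : ℕ) : ℕ := codeSeq (fun i => (a i).toNat) n

theorem codeSeq_eq_iff (x y : ℕ → ℕ) (n : ℕ) :
    codeSeq x n = codeSeq y n ↔ ∀ i < n, x i = y i := by
  induction n with
  | zero => simp [codeSeq]
  | succ n ih =>
    simp only [codeSeq, Nat.pair_eq_pair, ih]
    constructor
    · rintro ⟨h, h'⟩ i hi
      rcases Nat.lt_succ_iff_lt_or_eq.1 hi with h1 | rfl
      · exact h i h1
      · exact h'
    · intro h
      exact ⟨fun i hi => h i (by omega), h n (by omega)⟩

theorem codeCan_eq_iff (a b : Cantor) (n : ℕ) :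
    codeCan a n = codeCan b n ↔ ∀ i < n, a i = b i := by
  unfold codeCan
  rw [codeSeq_eq_iff]
  constructor
  · intro h i hi
    have := h i hi
    revert this
    cases a i <;> cases b i <;> simp
  · intro h i hi
    rw [h i hi]

theorem continuous_discrete_comp {X α β : Type*} [TopologicalSpace X] [TopologicalSpace α]
    [DiscreteTopology α] [TopologicalSpace β] (g : α → β) {f : X → α} (hf : Continuous f) :
    Continuous fun x => g (f x) :=
  continuous_of_discreteTopology.comp hf

theorem continuous_pair {X : Type*} [TopologicalSpace X] {f g : X → ℕ}
    (hf : Continuous f) (hg : Continuous g) : Continuous fun x => Nat.pair (f x) (g x) :=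
  continuous_discrete_comp (fun p : ℕ × ℕ => Nat.pair p.1 p.2) (hf.prodMk hg)

theorem continuous_codeSeq {X : Type*} [TopologicalSpace X] {f : X → ℕ → ℕ}
    (hf : ∀ i, Continuous fun x => f x i) (n : ℕ) : Continuous fun x => codeSeq (f x) n := by
  induction n with
  | zero => exact continuous_const
  | succ n ih => exact continuous_pair ih (hf n)

theorem continuous_codeCan (n : ℕ) : Continuous fun a : Cantor => codeCan a n :=
  continuous_codeSeq (fun i => continuous_discrete_comp Bool.toNat (continuous_apply i)) n

/-- evaluation of a continuous sequence at a continuous index -/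
theorem continuous_eval {X α : Type*} [TopologicalSpace X] [TopologicalSpace α]
    {f : X → ℕ → α} {g : X → ℕ} (hf : Continuous f) (hg : Continuous g) :
    Continuous fun x => f x (g x) := by
  rw [continuous_iff_continuousAt]
  intro x
  have h1 : ContinuousAt (fun y => f y (g x)) x :=
    ((continuous_apply (g x)).comp hf).continuousAt
  refine h1.congr ?_
  have : ∀ᶠ y in nhds x, g y = g x :=
    hg.continuousAt.eventually (p := fun k => k = g x) (by simp [nhds_discrete])
  filter_upwards [this] with y hy
  rw [hy]

theorem exists_tree_of_analytic {B : Set Cantor} (hB : MeasureTheory.AnalyticSet B) :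
    ∃ T : ℕ → ℕ → ℕ → Prop, ∀ a, a ∈ B ↔ ∃ b : ℕ → ℕ, ∀ n, T n (codeCan a n) (codeSeq b n) := by
  rw [MeasureTheory.AnalyticSet] at hB
  rcases hB with rfl | ⟨f, hf, rfl⟩
  · exact ⟨fun _ _ _ => False, by simp⟩
  · refine ⟨fun n s t => ∃ b, codeSeq b n = t ∧ codeCan (f b) n = s, fun a => ⟨?_, ?_⟩⟩
    · rintro ⟨b, rfl⟩
      exact ⟨b, fun n => ⟨b, rfl, rfl⟩⟩
    · rintro ⟨b, hb⟩
      choose c hc hc' using hb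
      refine ⟨b, ?_⟩
      have h1 : Filter.Tendsto c Filter.atTop (nhds b) := by
        rw [tendsto_pi_nhds]
        intro i
        refine tendsto_const_nhds.congr' ?_
        filter_upwards [Filter.eventually_gt_atTop i] with n hn
        exact ((codeSeq_eq_iff _ _ _).1 (hc n) i hn).symm
      have h2 : Filter.Tendsto (fun n => f (c n)) Filter.atTop (nhds a) := by
        rw [tendsto_pi_nhds]
        intro i
        refine tendsto_const_nhds.congr' ?_
        filter_upwards [Filter.eventually_gt_atTop i] with n hn
        exact ((codeCan_eq_iff _ _ _).1 (hc' n) i hn).symm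
      exact tendsto_nhds_unique ((hf.tendsto b).comp h1) h2

/-! ### A comparison game -/

/-- Positions from which the first player forces a win in finitely many steps. -/
inductive WinI (p q : ℕ → ℕ → Prop) : ℕ → ℕ → ℕ → Prop
  | now (n u v : ℕ) : p n u → ¬ q n v → WinI p q n u v
  | step (n u v k : ℕ) : p n u →
      (∀ l, WinI p q (n + 1) (Nat.pair u k) (Nat.pair v l)) → WinI p q n u v

/-- `f` is a good strategy of the second player. -/
def GoodII (p q : ℕ → ℕ → Prop) (f : ℕ → ℕ) : Prop :=
  ∀ (x : ℕ → ℕ) (n : ℕ), (∀ m ≤ n, p m (codeSeq x m)) →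
    q n (codeSeq (fun i => f (Nat.pair i (codeSeq x (i + 1)))) n)

/-- `g` is a good strategy of the first player. -/
def GoodI (p q : ℕ → ℕ → Prop) (g : ℕ → ℕ) : Prop :=
  ∀ (y : ℕ → ℕ) (n : ℕ), (∀ m < n, q m (codeSeq y m)) →
    p n (codeSeq (fun i => g (Nat.pair i (codeSeq y i))) n)

/-- Auxiliary recursion for the second player. -/
def recII (L : ℕ → ℕ → ℕ → ℕ → ℕ) : ℕ → ℕ → ℕ
  | 0, _ => 0
  | n + 1, u => Nat.pair (recII L n u.unpair.1)
      (L n u.unpair.1 (recII L n u.unpair.1) u.unpair.2)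

/-- Auxiliary recursion for the first player. -/
def recI (K : ℕ → ℕ → ℕ → ℕ) : ℕ → ℕ → ℕ
  | 0, _ => 0
  | n + 1, v => Nat.pair (recI K n v.unpair.1) (K n (recI K n v.unpair.1) v.unpair.1)

theorem determined (p q : ℕ → ℕ → Prop) : (∃ f, GoodII p q f) ∨ (∃ g, GoodI p q g) := by
  classical
  by_cases hW : WinI p q 0 0 0
  · right
    have h1 : ∀ n u v, ∃ k, WinI p q n u v → q n v →
        ∀ l, WinI p q (n + 1) (Nat.pair u k) (Nat.pair v l) := by
      intro n u v
      by_cases h : WinI p q n u v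
      · cases h with
        | now _ _ _ h1 h2 => exact ⟨0, fun _ h => absurd h h2⟩
        | step _ _ _ k h1 h2 => exact ⟨k, fun _ _ => h2⟩
      · exact ⟨0, fun h' => absurd h' h⟩
    choose K hK using h1
    refine ⟨fun w => K w.unpair.1 (recI K w.unpair.1 w.unpair.2) w.unpair.2, ?_⟩
    intro y
    set x : ℕ → ℕ := fun i => (fun w : ℕ => K w.unpair.1 (recI K w.unpair.1 w.unpair.2) w.unpair.2)
      (Nat.pair i (codeSeq y i)) with hx
    have hxi : ∀ i, x i = K i (recI K i (codeSeq y i)) (codeSeq y i) := by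
      intro i; simp [hx]
    have hU : ∀ n, codeSeq x n = recI K n (codeSeq y n) := by
      intro n
      induction n with
      | zero => rfl
      | succ n ih => simp [codeSeq, recI, ih, hxi]
    have hmain : ∀ n, (∀ m < n, q m (codeSeq y m)) → WinI p q n (codeSeq x n) (codeSeq y n) := by
      intro n
      induction n with
      | zero => intro _; exact hW
      | succ n ih =>
        intro h
        have := hK n _ _ (ih fun m hm => h m (by omega)) (h n (by omega)) (y n)
        simp only [codeSeq]
        rw [hxi n, ← hU n]
        exact this
    intro n hn
    cases hmain n hn with
    | now _ _ _ h1 _ => exact h1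
    | step _ _ _ k h1 _ => exact h1
  · left
    have h1 : ∀ n u v k, ∃ l, ¬ WinI p q n u v → p n u →
        ¬ WinI p q (n + 1) (Nat.pair u k) (Nat.pair v l) := by
      intro n u v k
      by_contra! h
      exact (h 0).1 (WinI.step n u v k (h 0).2.1 fun l => (h l).2.2)
    choose L hL using h1
    refine ⟨fun w => L w.unpair.1 w.unpair.2.unpair.1 (recII L w.unpair.1 w.unpair.2.unpair.1)
      w.unpair.2.unpair.2, ?_⟩
    intro x
    set y : ℕ → ℕ := fun i => (fun w : ℕ => L w.unpair.1 w.unpair.2.unpair.1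
      (recII L w.unpair.1 w.unpair.2.unpair.1) w.unpair.2.unpair.2)
      (Nat.pair i (codeSeq x (i + 1))) with hy
    have hyi : ∀ i, y i = L i (codeSeq x i) (recII L i (codeSeq x i)) (x i) := by
      intro i; simp [hy, codeSeq]
    have hV : ∀ n, codeSeq y n = recII L n (codeSeq x n) := by
      intro n
      induction n with
      | zero => rfl
      | succ n ih => simp [codeSeq, recII, ih, hyi]
    have hmain : ∀ n, (∀ m < n, p m (codeSeq x m)) →
        ¬ WinI p q n (codeSeq x n) (codeSeq y n) := by
      intro n
      induction n with
      | zero => intro _; exact hW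
      | succ n ih =>
        intro h
        have := hL n _ _ (x n) (ih fun m hm => h m (by omega)) (h n (by omega))
        simp only [codeSeq]
        rw [hyi n, ← hV n]
        exact this
    intro n hn
    by_contra hq
    exact hmain n (fun m hm => hn m hm.le) (WinI.now _ _ _ (hn n le_rfl) hq)

/-- The `i`-th predicate coded by `a`. -/
def predOf (i : ℕ) (a : Cantor) (n u : ℕ) : Prop :=
  a (Nat.pair i (Nat.pair n (Nat.pair (codeCan a n) u))) = true

theorem isClopen_predOf {X : Type*} [TopologicalSpace X] (i n : ℕ) {f : X → Cantor} {g : X → ℕ}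
    (hf : Continuous f) (hg : Continuous g) : IsClopen {x | predOf i (f x) n (g x)} := by
  have h : Continuous fun x => f x (Nat.pair i (Nat.pair n (Nat.pair (codeCan (f x) n) (g x)))) :=
    continuous_eval hf (continuous_pair continuous_const (continuous_pair continuous_const
      (continuous_pair ((continuous_codeCan n).comp hf) hg)))
  exact (isClopen_discrete ({true} : Set Bool)).preimage h

theorem isClosed_imp_of {X : Type*} [TopologicalSpace X] {P Q : X → Prop}
    (hP : IsOpen {x | P x}) (hQ : IsClosed {x | Q x}) : IsClosed {x | P x → Q x} :=
  isClosed_imp hP hQ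

theorem exists_closed_pair :
    ∃ F₀ F₁ : Set (Cantor × (ℕ → ℕ)), IsClosed F₀ ∧ IsClosed F₁ ∧
      (∀ a, (∃ b, (a, b) ∈ F₀) ∨ (∃ b, (a, b) ∈ F₁)) ∧
      ¬ ∃ B : Set Cantor, MeasurableSet B ∧ (∀ a ∈ B, ∃ b, (a, b) ∈ F₀) ∧
        (∀ a, a ∉ B → ∃ b, (a, b) ∈ F₁) := by
  classical
  refine ⟨{z | GoodII (predOf 0 z.1) (predOf 1 z.1) z.2},
    {z | GoodI (predOf 0 z.1) (predOf 1 z.1) z.2}, ?_, ?_, ?_, ?_⟩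
  · unfold GoodII
    simp only [Set.ofPred_forall]
    refine isClosed_iInter fun x => isClosed_iInter fun n => isClosed_imp_of ?_ ?_
    · simp only [Set.ofPred_forall]
      refine (Set.finite_Iic n).isOpen_biInter fun m _ => ?_
      exact (isClopen_predOf 0 m continuous_fst continuous_const).isOpen
    · exact (isClopen_predOf 1 n continuous_fst
        (continuous_codeSeq (fun i => (continuous_apply _).comp continuous_snd) n)).isClosed
  · unfold GoodI
    simp only [Set.ofPred_forall]
    refine isClosed_iInter fun x => isClosed_iInter fun n => isClosed_imp_of ?_ ?_
    · simp only [Set.ofPred_forall]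
      refine (Set.finite_Iio n).isOpen_biInter fun m _ => ?_
      exact (isClopen_predOf 1 m continuous_fst continuous_const).isOpen
    · exact (isClopen_predOf 0 n continuous_fst
        (continuous_codeSeq (fun i => (continuous_apply _).comp continuous_snd) n)).isClosed
  · exact fun a => determined (predOf 0 a) (predOf 1 a)
  · rintro ⟨B, hB, h0, h1⟩
    have : PolishSpace Bool := inferInstance
    obtain ⟨P, hP⟩ := exists_tree_of_analytic hB.analyticSet
    obtain ⟨Q, hQ⟩ := exists_tree_of_analytic hB.compl.analyticSet
    let a : Cantor := fun k => decide
      (if k.unpair.1 = 0 then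
        P k.unpair.2.unpair.1 k.unpair.2.unpair.2.unpair.1 k.unpair.2.unpair.2.unpair.2
      else Q k.unpair.2.unpair.1 k.unpair.2.unpair.2.unpair.1 k.unpair.2.unpair.2.unpair.2)
    have hp : ∀ n u, predOf 0 a n u ↔ P n (codeCan a n) u := by
      intro n u
      unfold predOf
      generalize codeCan a n = c
      simp [a]
    have hq : ∀ n u, predOf 1 a n u ↔ Q n (codeCan a n) u := by
      intro n u
      unfold predOf
      generalize codeCan a n = c
      simp [a]
    by_cases ha : a ∈ B
    · obtain ⟨f, hf⟩ := h0 a ha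
      obtain ⟨x, hx⟩ := (hP a).1 ha
      have : a ∈ Bᶜ := (hQ a).2 ⟨_, fun n => (hq n _).1 (hf x n fun m _ => (hp m _).2 (hx m))⟩
      exact this ha
    · obtain ⟨g, hg⟩ := h1 a ha
      obtain ⟨y, hy⟩ := (hQ a).1 ha
      exact ha ((hP a).2 ⟨_, fun n => (hp n _).1 (hg y n fun m _ => (hq m _).2 (hy m))⟩)

/-! ### Generated ideals -/

/-- Levels of the generated ideal. -/
def lev (K : Set Cantor) : ℕ → Set Cantor
  | 0 => K
  | n + 1 => {x | ∃ y ∈ lev K n, ∃ z ∈ lev K n, toSet x ⊆ toSet y ∪ toSet z}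

/-- The generated ideal (for hereditary `K`). -/
def gen (K : Set Cantor) : Set Cantor := ⋃ n, lev K n

theorem isClopen_coord {X : Type*} [TopologicalSpace X] {f : X → Cantor} (hf : Continuous f)
    (k : ℕ) : IsClopen {x | f x k = true} :=
  (isClopen_discrete ({true} : Set Bool)).preimage ((continuous_apply k).comp hf)

theorem isClosed_lev {K : Set Cantor} (hK : IsClosed K) (n : ℕ) : IsClosed (lev K n) := by
  induction n with
  | zero => exact hK
  | succ n ih =>
    have h : IsClosed {w : Cantor × (Cantor × Cantor) | w.2.1 ∈ lev K n ∧ w.2.2 ∈ lev K n ∧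
        ∀ k, w.1 k = true → w.2.1 k = true ∨ w.2.2 k = true} := by
      refine (ih.preimage (by fun_prop)).inter ((ih.preimage (by fun_prop)).inter ?_)
      have : IsClosed {w : Cantor × (Cantor × Cantor) |
          ∀ k, w.1 k = true → w.2.1 k = true ∨ w.2.2 k = true} := by
        simp only [Set.ofPred_forall]
        refine isClosed_iInter fun k => isClosed_imp_of ?_ ?_
        · exact (isClopen_coord continuous_fst k).isOpen
        · exact (isClopen_coord (f := fun w : Cantor × (Cantor × Cantor) => w.2.1)
            (by fun_prop) k).isClosed.union (isClopen_coord
            (f := fun w : Cantor × (Cantor × Cantor) => w.2.2) (by fun_prop) k).isClosed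
      exact this
    have h2 := isClosedMap_fst_of_compactSpace _ h
    convert h2 using 1
    ext x
    constructor
    · rintro ⟨y, hy, z, hz, hx⟩
      exact ⟨(x, y, z), ⟨hy, hz, fun k hk => hx hk⟩, rfl⟩
    · rintro ⟨⟨x', y, z⟩, ⟨hy, hz, hx⟩, rfl⟩
      exact ⟨y, hy, z, hz, fun k hk => hx k hk⟩

theorem lev_hered {K : Set Cantor} (hK : Hereditary K) (n : ℕ) : Hereditary (lev K n) := by
  cases n with
  | zero => exact hK
  | succ n =>
    rintro x ⟨y, hy, z, hz, hx⟩ x' hx'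
    exact ⟨y, hy, z, hz, hx'.trans hx⟩

theorem lev_mono (K : Set Cantor) : Monotone (lev K) := by
  refine monotone_nat_of_le_succ fun n x hx => ?_
  exact ⟨x, hx, x, hx, subset_union_left⟩

theorem gen_union {K : Set Cantor} {x y z : Cantor} (hy : y ∈ gen K) (hz : z ∈ gen K)
    (h : toSet x ⊆ toSet y ∪ toSet z) : x ∈ gen K := by
  obtain ⟨m, hm⟩ := mem_iUnion.1 hy
  obtain ⟨n, hn⟩ := mem_iUnion.1 hz
  exact mem_iUnion.2 ⟨max m n + 1, y, lev_mono K (le_max_left _ _) hm, z,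
    lev_mono K (le_max_right _ _) hn, h⟩

theorem gen_isIdeal {K : Set Cantor} (hK : Hereditary K) : IsIdeal (gen K) := by
  constructor
  · intro x hx y hy
    obtain ⟨m, hm⟩ := mem_iUnion.1 hx
    exact mem_iUnion.2 ⟨m, lev_hered hK m x hm y hy⟩
  · intro x hx y hy
    refine gen_union hx hy ?_
    intro k hk
    simpa [toSet] using hk

theorem gen_induct {K : Set Cantor} {Q : Cantor → Prop} (h0 : ∀ x ∈ K, Q x)
    (h1 : ∀ x y z, Q y → Q z → toSet x ⊆ toSet y ∪ toSet z → Q x) {x : Cantor}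
    (hx : x ∈ gen K) : Q x := by
  obtain ⟨n, hn⟩ := mem_iUnion.1 hx
  induction n generalizing x with
  | zero => exact h0 x hn
  | succ n ih =>
    obtain ⟨y, hy, z, hz, h⟩ := hn
    exact h1 x y z (ih (mem_iUnion.2 ⟨n, hy⟩) hy) (ih (mem_iUnion.2 ⟨n, hz⟩) hz) h

theorem finite_mem_gen {K : Set Cantor} (hK : ∀ x, (toSet x).Subsingleton → x ∈ K)
    {x : Cantor} (hx : (toSet x).Finite) : x ∈ gen K := by
  have key : ∀ n : ℕ, ∀ x : Cantor, (∀ k, x k = true → k < n) → x ∈ gen K := by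
    intro n
    induction n with
    | zero =>
      intro x hx
      refine mem_iUnion.2 ⟨0, hK x ?_⟩
      intro k hk
      exact absurd (hx k hk) (by omega)
    | succ n ih =>
      intro x hx
      refine gen_union (y := fun k => x k && decide (k < n)) (z := fun k => decide (k = n))
        (ih _ ?_) (mem_iUnion.2 ⟨0, hK _ ?_⟩) ?_
      · intro k hk
        simp at hk
        exact hk.2
      · intro k hk l hl
        simp [toSet] at hk hl
        omega
      · intro k hk
        have := hx k hk
        simp only [toSet, mem_union, mem_ofPred_eq, Bool.and_eq_true, decide_eq_true_eq] at hk ⊢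
        by_cases h : k = n
        · exact Or.inr h
        · exact Or.inl ⟨hk, by omega⟩
  obtain ⟨N, hN⟩ := hx.bddAbove
  exact key (N + 1) x fun k hk => Nat.lt_succ_of_le (hN hk)

/-! ### The binary tree -/

/-- The branch of the binary tree determined by `a`. -/
def branch (a : Cantor) : Cantor := fun k => decide (k.unpair.2 = codeCan a k.unpair.1)

theorem branch_iff (a : Cantor) (k : ℕ) :
    branch a k = true ↔ k.unpair.2 = codeCan a k.unpair.1 := by simp [branch]

theorem branch_pair (a : Cantor) (n : ℕ) : branch a (Nat.pair n (codeCan a n)) = true := by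
  simp [branch]

theorem continuous_branch : Continuous branch := by
  refine continuous_pi fun k => ?_
  exact continuous_discrete_comp (fun c => decide (k.unpair.2 = c)) (continuous_codeCan _)

theorem branch_agree {a b : Cantor} {k : ℕ} (ha : branch a k = true) (hb : branch b k = true) :
    ∀ i < k.unpair.1, a i = b i := by
  rw [branch_iff] at ha hb
  exact (codeCan_eq_iff _ _ _).1 (ha.symm.trans hb)

theorem branch_of_agree {a b : Cantor} {k : ℕ} (ha : branch a k = true)
    (h : ∀ i < k.unpair.1, a i = b i) : branch b k = true := by
  rw [branch_iff] at *
  rw [ha]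
  exact (codeCan_eq_iff _ _ _).2 h

theorem branch_inj {a : Cantor} {k l : ℕ} (hk : branch a k = true) (hl : branch a l = true)
    (h : k.unpair.1 = l.unpair.1) : k = l := by
  rw [branch_iff] at hk hl
  rw [← Nat.pair_unpair k, ← Nat.pair_unpair l, hk, hl, h]

theorem branch_infinite (a : Cantor) : (toSet (branch a)).Infinite := by
  refine Set.infinite_of_injective_forall_mem (f := fun n => Nat.pair n (codeCan a n)) ?_
    (branch_pair a)
  intro m n h
  exact (Nat.pair_eq_pair.1 h).1

theorem infinite_of_branch {a : Cantor} {s : Set ℕ} (hs : s.Infinite)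
    (h : ∀ k ∈ s, branch a k = true) (N : ℕ) : ∃ k ∈ s, N < k.unpair.1 := by
  by_contra! hc
  refine (Set.Infinite.image (f := fun k : ℕ => k.unpair.1) (s := s) ?_ hs)
    ((Set.finite_Iic N).subset ?_)
  · intro k hk l hl hkl
    exact branch_inj (h k hk) (h l hl) hkl
  · rintro _ ⟨k, hk, rfl⟩
    exact hc k hk

/-- Strict extension in the tree. -/
def ext (k l : ℕ) : Prop := k.unpair.1 < l.unpair.1 ∧
  ∃ a, branch a k = true ∧ branch a l = true

theorem ext_branch {k l : ℕ} (h : ext k l) {b : Cantor} (hb : branch b l = true) :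
    branch b k = true := by
  obtain ⟨hlt, a, hk, hl⟩ := h
  exact branch_of_agree hk fun i hi => branch_agree hl hb i (hi.trans hlt)

theorem ext_trans {k l m : ℕ} (h : ext k l) (h' : ext l m) : ext k m := by
  obtain ⟨hlt, a, hl, hm⟩ := h'
  exact ⟨h.1.trans hlt, a, ext_branch h hl, hm⟩

/-- Antichains of the tree. -/
def Anti : Set Cantor := {y | ∀ k l, y k = true → y l = true → k ≠ l →
  ¬ ∃ a, branch a k = true ∧ branch a l = true}

theorem isClosed_Anti : IsClosed Anti := by
  unfold Anti
  simp only [Set.ofPred_forall]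
  refine isClosed_iInter fun k => isClosed_iInter fun l => isClosed_imp_of ?_
    (isClosed_imp_of ?_ isClosed_const)
  · exact (isClopen_coord continuous_id k).isOpen
  · exact (isClopen_coord continuous_id l).isOpen

theorem chain_or_anti {Z : Set ℕ} (hZ : Z.Infinite) :
    ∃ f : ℕ → ℕ, Function.Injective f ∧ (∀ n, f n ∈ Z) ∧
      ((∃ a, ∀ n, branch a (f n) = true) ∨
        ∀ m n, m ≠ n → ¬ ∃ a, branch a (f m) = true ∧ branch a (f n) = true) := by
  have : IsTrans ℕ ext := ⟨fun _ _ _ => ext_trans⟩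
  have : IsTrans ℕ (fun k l => ext l k) := ⟨fun _ _ _ h h' => ext_trans h' h⟩
  set e : ℕ → ℕ := fun n => (hZ.natEmbedding Z n : ℕ) with he
  have hei : Function.Injective e :=
    Subtype.val_injective.comp (hZ.natEmbedding Z).injective
  have heZ : ∀ n, e n ∈ Z := fun n => (hZ.natEmbedding Z n).2
  obtain ⟨g, hg | hg⟩ := exists_increasing_or_nonincreasing_subseq ext e
  · refine ⟨e ∘ g, hei.comp g.injective, fun n => heZ _, Or.inl ?_⟩
    set f : ℕ → ℕ := e ∘ g with hf
    have hfe : ∀ m n, m < n → ext (f m) (f n) := hg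
    have h1 : ∀ n, ∃ a, branch a (f n) = true := fun n =>
      (hfe n (n + 1) (by omega)).2.imp fun a ha => ha.1
    choose A hA using h1
    have hA' : ∀ n m, n ≤ m → branch (A m) (f n) = true := by
      intro n m h
      rcases h.eq_or_lt with rfl | h
      · exact hA n
      · exact ext_branch (hfe n m h) (hA m)
    have hmono : StrictMono fun n => (f n).unpair.1 := fun m n h => (hfe m n h).1
    refine ⟨fun i => A (i + 1) i, fun n => branch_of_agree (hA n) ?_⟩
    intro i hi
    rcases le_total n (i + 1) with h | h
    · exact branch_agree (hA n) (hA' n (i + 1) h) i hi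
    · exact branch_agree (hA' (i + 1) n h) (hA (i + 1)) i
        (lt_of_lt_of_le (Nat.lt_succ_self i) (hmono.le_apply (x := i + 1)))
  · obtain ⟨g', hg' | hg'⟩ := exists_increasing_or_nonincreasing_subseq (fun k l => ext l k) (e ∘ g)
    · exfalso
      have hanti : StrictAnti fun n => ((e ∘ g) (g' n)).unpair.1 := fun m n h => (hg' m n h).1
      have hb : ∀ n, ((e ∘ g) (g' n)).unpair.1 + n ≤ ((e ∘ g) (g' 0)).unpair.1 := by
        intro n
        induction n with
        | zero => exact le_rfl
        | succ n ih =>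
          have := hanti (Nat.lt_succ_self n)
          simp only [Nat.succ_eq_add_one] at this
          omega
      have := hb (((e ∘ g) (g' 0)).unpair.1 + 1)
      omega
    · refine ⟨e ∘ g ∘ g', hei.comp (g.injective.comp g'.injective), fun n => heZ _, Or.inr ?_⟩
      have key : ∀ m n, m < n → ¬ ∃ a, branch a ((e ∘ g ∘ g') m) = true ∧
          branch a ((e ∘ g ∘ g') n) = true := by
        rintro m n hmn ⟨a, hm, hn⟩
        rcases lt_trichotomy ((e ∘ g ∘ g') m).unpair.1 ((e ∘ g ∘ g') n).unpair.1 with h | h | h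
        · exact hg _ _ (g'.strictMono hmn) ⟨h, a, hm, hn⟩
        · exact hmn.ne (hei.comp (g.injective.comp g'.injective) (branch_inj hm hn h))
        · exact hg' _ _ hmn ⟨h, a, hn, hm⟩
      intro m n hmn
      rcases lt_or_gt_of_ne hmn with h | h
      · exact key m n h
      · rintro ⟨a, h1, h2⟩
        exact key n m h ⟨a, h2, h1⟩

/-! ### Sparse sets -/

/-- Pairs `(a, c)` such that `c` is sparse with respect to a witness for `a`. -/
def sparse (F : Set (Cantor × (ℕ → ℕ))) : Set (Cantor × Cantor) :=
  {w | ∃ b, (w.1, b) ∈ F ∧ ∀ j, ((Finset.range (b j)).filter fun n => w.2 n = true).card ≤ j}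

theorem exists_of_closure {F : Set (Cantor × (ℕ → ℕ))} (hF : IsClosed F) {a c : Cantor}
    (h : (a, c) ∈ closure (sparse F)) (hc : (toSet c).Infinite) : ∃ b, (a, b) ∈ F := by
  obtain ⟨w, hw, hlim⟩ := mem_closure_iff_seq_limit.1 h
  choose b hb hbc using hw
  have h1 : Filter.Tendsto (fun k => (w k).1) Filter.atTop (nhds a) :=
    (continuous_fst.tendsto _).comp hlim
  have h2 : Filter.Tendsto (fun k => (w k).2) Filter.atTop (nhds c) :=
    (continuous_snd.tendsto _).comp hlim
  have hbd : ∀ j, ∃ N, ∀ k, b k j ≤ N := by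
    intro j
    obtain ⟨s, hs, hcard⟩ := hc.exists_subset_card_eq (j + 1)
    obtain ⟨N, hN⟩ := s.bddAbove
    have hev : ∀ᶠ k in Filter.atTop, ∀ n ∈ s, (w k).2 n = true := by
      rw [Filter.eventually_all_finset]
      intro n hn
      have := (tendsto_pi_nhds.1 h2 n).eventually (p := fun v => v = c n) (by simp [nhds_discrete])
      filter_upwards [this] with k hk
      rw [hk]
      exact hs hn
    have hev2 : ∀ᶠ k in Filter.atTop, b k j ≤ N := by
      filter_upwards [hev] with k hk
      by_contra! hlt
      have : s ⊆ (Finset.range (b k j)).filter fun n => (w k).2 n = true := by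
        intro n hn
        rw [Finset.mem_filter, Finset.mem_range]
        exact ⟨lt_of_le_of_lt (hN hn) hlt, hk n hn⟩
      have := (Finset.card_le_card this).trans (hbc k j)
      omega
    obtain ⟨k₀, hk₀⟩ := Filter.eventually_atTop.1 hev2
    refine ⟨N + ∑ k ∈ Finset.range k₀, b k j, fun k => ?_⟩
    rcases lt_or_ge k k₀ with h | h
    · have := Finset.single_le_sum (f := fun k => b k j) (fun _ _ => Nat.zero_le _)
        (Finset.mem_range.2 h)
      exact this.trans (Nat.le_add_left _ _)
    · exact (hk₀ k h).trans (Nat.le_add_right _ _)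
  choose N hN using hbd
  have hcomp : IsCompact (Set.univ.pi fun j => Set.Iic (N j)) :=
    isCompact_univ_pi fun j => (Set.finite_Iic (N j)).isCompact
  obtain ⟨b', -, φ, hφ, hb'⟩ := hcomp.tendsto_subseq (x := b) (fun k j _ => hN j k)
  refine ⟨b', hF.mem_of_tendsto ((h1.comp hφ.tendsto_atTop).prodMk_nhds hb') ?_⟩
  exact Filter.Eventually.of_forall fun k => hb _

theorem exists_sparse (b : ℕ → ℕ) {Z : Set ℕ} (hZ : Z.Infinite) :
    ∃ c : Cantor, (toSet c).Infinite ∧ toSet c ⊆ Z ∧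
      ∀ j, ((Finset.range (b j)).filter fun n => c n = true).card ≤ j := by
  classical
  have hfr : ∀ n, ∃ᶠ k in Filter.atTop, k ∈ Z ∧ ∀ j ≤ n, b j ≤ k := by
    intro n
    refine (Nat.frequently_atTop_iff_infinite.2 hZ).and_eventually ?_
    have : ∀ᶠ k in Filter.atTop, ∀ j ∈ Finset.Iic n, b j ≤ k := by
      rw [Filter.eventually_all_finset]
      intro j _
      exact Filter.eventually_ge_atTop _
    simpa using this
  obtain ⟨φ, hφ, hP⟩ := Filter.extraction_forall_of_frequently hfr
  refine ⟨fun n => decide (n ∈ Set.range φ), ?_, ?_, ?_⟩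
  · refine (Set.infinite_range_of_injective hφ.injective).mono ?_
    intro n hn
    simpa [toSet] using hn
  · intro n hn
    simp only [toSet, mem_ofPred_eq, decide_eq_true_eq] at hn
    obtain ⟨k, rfl⟩ := hn
    exact (hP k).1
  · intro j
    have : ((Finset.range (b j)).filter fun n => decide (n ∈ Set.range φ) = true) ⊆
        (Finset.range j).image φ := by
      intro n hn
      simp only [Finset.mem_filter, Finset.mem_range, decide_eq_true_eq] at hn
      obtain ⟨hn, k, rfl⟩ := hn
      refine Finset.mem_image.2 ⟨k, Finset.mem_range.2 ?_, rfl⟩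
      by_contra! hjk
      exact absurd ((hP k).2 j hjk) (by omega)
    exact (Finset.card_le_card this).trans (Finset.card_image_le.trans (by simp))

/-- The family of sparse chains. -/
def Chains (F : Set (Cantor × (ℕ → ℕ))) : Set Cantor :=
  {y | ∃ a c, (a, c) ∈ closure (sparse F) ∧
    ∀ k, y k = true → branch a k = true ∧ c k.unpair.1 = true}

theorem isClosed_Chains (F : Set (Cantor × (ℕ → ℕ))) : IsClosed (Chains F) := by
  have h : IsClosed {w : Cantor × (Cantor × Cantor) | w.2 ∈ closure (sparse F) ∧
      ∀ k, w.1 k = true → branch w.2.1 k = true ∧ w.2.2 k.unpair.1 = true} := by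
    refine (isClosed_closure.preimage continuous_snd).inter ?_
    have : IsClosed {w : Cantor × (Cantor × Cantor) |
        ∀ k, w.1 k = true → branch w.2.1 k = true ∧ w.2.2 k.unpair.1 = true} := by
      simp only [Set.ofPred_forall]
      refine isClosed_iInter fun k => isClosed_imp_of ?_ ?_
      · exact (isClopen_coord continuous_fst k).isOpen
      · exact (isClopen_coord (f := fun w : Cantor × (Cantor × Cantor) => branch w.2.1)
          (continuous_branch.comp (by fun_prop)) k).isClosed.inter (isClopen_coord
          (f := fun w : Cantor × (Cantor × Cantor) => w.2.2) (by fun_prop) _).isClosed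
    exact this
  have h2 := isClosedMap_fst_of_compactSpace _ h
  convert h2 using 1
  ext x
  constructor
  · rintro ⟨a, c, hac, hx⟩
    exact ⟨(x, a, c), ⟨hac, hx⟩, rfl⟩
  · rintro ⟨⟨x', a, c⟩, ⟨hac, hx⟩, rfl⟩
    exact ⟨a, c, hac, hx⟩

/-- Sets in `Chains F` are almost disjoint from branches with empty section. -/
theorem Chains_finite {F : Set (Cantor × (ℕ → ℕ))} (hF : IsClosed F) {a : Cantor}
    (ha : ¬ ∃ b, (a, b) ∈ F) {y : Cantor} (hy : y ∈ Chains F) :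
    (toSet y ∩ toSet (branch a)).Finite := by
  by_contra hinf
  obtain ⟨a', c, hac, hyk⟩ := hy
  have hex := infinite_of_branch (a := a) hinf (fun k hk => hk.2)
  have heq : a' = a := by
    funext i
    obtain ⟨k, hk, hik⟩ := hex i
    exact branch_agree (hyk k hk.1).1 hk.2 i hik
  subst heq
  refine ha (exists_of_closure hF hac (Set.infinite_of_not_bddAbove ?_))
  rintro ⟨N, hN⟩
  obtain ⟨k, hk, hik⟩ := hex N
  exact absurd (hN (hyk k hk.1).2) (by omega)

theorem Anti_finite (a : Cantor) {y : Cantor} (hy : y ∈ Anti) :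
    (toSet y ∩ toSet (branch a)).Finite := by
  refine Set.Subsingleton.finite ?_
  rintro k ⟨hk, hk'⟩ l ⟨hl, hl'⟩
  by_contra hne
  exact hy k l hk hl hne ⟨a, hk', hl'⟩

theorem Chains_hered (F : Set (Cantor × (ℕ → ℕ))) : Hereditary (Chains F) := by
  rintro x ⟨a, c, hac, h⟩ y hy
  exact ⟨a, c, hac, fun k hk => h k (hy hk)⟩

theorem Anti_hered : Hereditary Anti :=
  fun _ hx _ hy k l hk hl => hx k l (hy hk) (hy hl)

theorem Anti_subsingleton (x : Cantor) (hx : (toSet x).Subsingleton) : x ∈ Anti :=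
  fun _ _ hk hl hne => absurd (hx hk hl) hne

theorem hered_union {K L : Set Cantor} (hK : Hereditary K) (hL : Hereditary L) :
    Hereditary (K ∪ L) := by
  rintro x (hx | hx) y hy
  · exact Or.inl (hK x hx y hy)
  · exact Or.inr (hL x hx y hy)

theorem Chains_tall {F : Set (Cantor × (ℕ → ℕ))} {a : Cantor} (ha : ∃ b, (a, b) ∈ F)
    {f : ℕ → ℕ} (hf : Function.Injective f) (hfa : ∀ n, branch a (f n) = true) :
    ∃ y ∈ Chains F, (toSet y).Infinite ∧ toSet y ⊆ Set.range f := by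
  classical
  obtain ⟨b, hb⟩ := ha
  have hinj : Function.Injective fun n => (f n).unpair.1 := fun m n h =>
    hf (branch_inj (hfa m) (hfa n) h)
  obtain ⟨c, hc, hcZ, hcb⟩ := exists_sparse b (Set.infinite_range_of_injective hinj)
  refine ⟨fun k => decide (k ∈ Set.range f ∧ c k.unpair.1 = true),
    ⟨a, c, subset_closure ⟨b, hb, hcb⟩, ?_⟩, ?_, ?_⟩
  · intro k hk
    simp only [decide_eq_true_eq] at hk
    obtain ⟨⟨n, rfl⟩, hk⟩ := hk
    exact ⟨hfa n, hk⟩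
  · intro hfin
    refine hc ((hfin.image fun k => k.unpair.1).subset ?_)
    intro n hn
    obtain ⟨m, rfl⟩ := hcZ hn
    refine ⟨f m, ?_, rfl⟩
    have hn' : c (f m).unpair.1 = true := hn
    simp [toSet, hn']
  · intro k hk
    simp only [toSet, mem_ofPred_eq, decide_eq_true_eq] at hk
    exact hk.1

/-- There is a tall `Fσ` ideal on `ℕ` without a Borel selector. -/
theorem exists_fsigma_tall_ideal_no_selector :
    ∃ I : Set Cantor, IsIdeal I ∧ IsFsigma I ∧ Tall I ∧
      ¬ ∃ S : Cantor → Cantor, IsSelector I S := by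
  classical
  obtain ⟨F₀, F₁, hF₀, hF₁, hcov, hno⟩ := exists_closed_pair
  have hKh : Hereditary ((Chains F₀ ∪ Anti) ∪ Chains F₁) :=
    hered_union (hered_union (Chains_hered _) Anti_hered) (Chains_hered _)
  have hJh : Hereditary (Chains F₀ ∪ Anti) := hered_union (Chains_hered _) Anti_hered
  have hJc : IsClosed (Chains F₀ ∪ Anti) := (isClosed_Chains _).union isClosed_Anti
  have hKc : IsClosed ((Chains F₀ ∪ Anti) ∪ Chains F₁) := hJc.union (isClosed_Chains _)
  refine ⟨gen ((Chains F₀ ∪ Anti) ∪ Chains F₁), gen_isIdeal hKh,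
    ⟨lev _, isClosed_lev hKc, rfl⟩, ?_, ?_⟩
  · intro x hx
    obtain ⟨f, hf, hfx, ⟨a, ha⟩ | hanti⟩ := chain_or_anti hx
    · have : ∃ y ∈ (Chains F₀ ∪ Anti) ∪ Chains F₁, (toSet y).Infinite ∧
          toSet y ⊆ Set.range f := by
        rcases hcov a with h | h
        · obtain ⟨y, hy, h⟩ := Chains_tall h hf ha
          exact ⟨y, Or.inl (Or.inl hy), h⟩
        · obtain ⟨y, hy, h⟩ := Chains_tall h hf ha
          exact ⟨y, Or.inr hy, h⟩
      obtain ⟨y, hy, hyi, hyf⟩ := this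
      refine ⟨y, mem_iUnion.2 ⟨0, hy⟩, hyi, hyf.trans ?_⟩
      rintro _ ⟨n, rfl⟩
      exact hfx n
    · refine ⟨fun k => decide (k ∈ Set.range f), mem_iUnion.2 ⟨0, Or.inl (Or.inr ?_)⟩, ?_, ?_⟩
      · intro k l hk hl hne
        simp only [decide_eq_true_eq] at hk hl
        obtain ⟨m, rfl⟩ := hk
        obtain ⟨n, rfl⟩ := hl
        exact hanti m n fun h => hne (by rw [h])
      · refine (Set.infinite_range_of_injective hf).mono ?_
        intro k hk
        simpa [toSet] using hk
      · intro k hk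
        simp only [toSet, mem_ofPred_eq, decide_eq_true_eq] at hk
        obtain ⟨m, rfl⟩ := hk
        exact hfx m
  · rintro ⟨S, hSm, hS⟩
    refine hno ⟨{a | S (branch a) ∈ gen (Chains F₀ ∪ Anti)}, ?_, ?_, ?_⟩
    · have hJm : MeasurableSet (gen (Chains F₀ ∪ Anti)) :=
        MeasurableSet.iUnion fun n => (isClosed_lev hJc n).measurableSet
      exact (hSm.comp continuous_branch.measurable) hJm
    · intro a ha
      by_contra hE
      have hfin : (toSet (S (branch a)) ∩ toSet (branch a)).Finite := by
        refine gen_induct (Q := fun x => (toSet x ∩ toSet (branch a)).Finite) ?_ ?_ ha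
        · rintro x (hx | hx)
          · exact Chains_finite hF₀ hE hx
          · exact Anti_finite a hx
        · intro x y z hy hz hx
          refine (hy.union hz).subset ?_
          rw [← Set.union_inter_distrib_right]
          exact Set.inter_subset_inter_left _ hx
      rw [Set.inter_eq_left.2 (hS (branch a)).1] at hfin
      exact (hS (branch a)).2.1 (branch_infinite a) hfin
    · intro a ha
      by_contra hE
      apply ha
      have hJ := gen_isIdeal hJh
      have key : (fun k => S (branch a) k && branch a k) ∈ gen (Chains F₀ ∪ Anti) := by
        refine gen_induct (Q := fun x => (fun k => x k && branch a k) ∈ gen (Chains F₀ ∪ Anti))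
          ?_ ?_ (hS (branch a)).2.2
        · rintro x (hx | hx)
          · refine hJ.1 x (mem_iUnion.2 ⟨0, hx⟩) _ ?_
            intro k hk
            simp only [toSet, mem_ofPred_eq, Bool.and_eq_true] at hk
            exact hk.1
          · refine finite_mem_gen (fun x hx => Or.inr (Anti_subsingleton x hx)) ?_
            refine (Chains_finite hF₁ hE hx).subset ?_
            intro k hk
            simp only [toSet, mem_ofPred_eq, Bool.and_eq_true] at hk
            exact hk
        · intro x y z hy hz hx
          refine gen_union hy hz ?_
          intro k hk
          simp only [toSet, mem_ofPred_eq, Bool.and_eq_true, mem_union] at hk ⊢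
          rcases hx hk.1 with h | h
          · exact Or.inl ⟨h, hk.2⟩
          · exact Or.inr ⟨h, hk.2⟩
      refine hJ.1 _ key _ ?_
      intro k hk
      have := (hS (branch a)).1 hk
      simp only [toSet, mem_ofPred_eq, Bool.and_eq_true] at hk this ⊢
      exact ⟨hk, this⟩
end

section
/- Let B be a front on ℕ. There is a tall ideal I on ℕ which is coanalytic as a subset of the Cantor space 2^ℕ (i.e. 2^ℕ \ I is analytic) such that for every F ⊆ B the family hom(F) of infinite F-homogeneous sets is not contained in I. -/
open Set

/-- All members of `B` of the form `s ∪ t`, `t ⊆ y`, have `f`-colour `c`. -/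
def HH (B : Set (Finset ℕ)) (f : Cantor) (s : Finset ℕ) (y : Cantor) (c : Bool) : Prop :=
  ∀ t : Finset ℕ, (∀ n ∈ t, y n = true) → s ∪ t ∈ B → f (Encodable.encode (s ∪ t)) = c

def PP (B : Set (Finset ℕ)) (s : Finset ℕ) : Prop :=
  ∃ S : Cantor × Cantor → Cantor, Measurable S ∧ ∀ f x : Cantor, (toSet x).Infinite →
    (∀ n ∈ toSet x, s.sup id < n) →
    toSet (S (f, x)) ⊆ toSet x ∧ (toSet (S (f, x))).Infinite ∧ ∃ c, HH B f s (S (f, x)) c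

theorem meas_coord (k : ℕ) : MeasurableSet {x : Cantor | x k = true} :=
  measurableSet_eq_fun (measurable_pi_apply k) measurable_const

theorem meas_to_cantor {α : Type*} [MeasurableSpace α] (g : α → Cantor)
    (h : ∀ k, MeasurableSet {a | g a k = true}) : Measurable g := by
  refine measurable_pi_iff.2 fun k => ?_
  refine measurable_to_bool ?_
  exact h k

theorem meas_app {α : Type*} [MeasurableSpace α] {g : α → Cantor} (hg : Measurable g) (k : ℕ)
    (b : Bool) : MeasurableSet {a | g a k = b} :=
  measurableSet_eq_fun ((measurable_pi_apply k).comp hg) measurable_const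

theorem meas_HH (B : Set (Finset ℕ)) {α : Type*} [MeasurableSpace α] {g h : α → Cantor}
    (hg : Measurable g) (hh : Measurable h) (s : Finset ℕ) (c : Bool) :
    MeasurableSet {a | HH B (g a) s (h a) c} := by
  unfold HH
  rw [setOf_forall]
  refine MeasurableSet.iInter fun t => ?_
  have : {a | (∀ n ∈ t, h a n = true) → s ∪ t ∈ B → g a (Encodable.encode (s ∪ t)) = c}
    = (⋂ n ∈ t, {a | h a n = true})ᶜ ∪ ({a | s ∪ t ∈ B}ᶜ ∪ {a | g a (Encodable.encode (s ∪ t)) = c}) := by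
    ext a
    simp only [mem_setOf_eq, mem_union, mem_compl_iff, mem_iInter]
    tauto
  rw [this]
  refine MeasurableSet.union (MeasurableSet.compl ?_) (MeasurableSet.union (MeasurableSet.const _).compl ?_)
  · exact MeasurableSet.biInter t.countable_toSet fun n _ => meas_app hh n true
  · exact meas_app hg _ c

theorem meas_inf {α : Type*} [MeasurableSpace α] {g : α → Cantor}
    (hg : Measurable g) : MeasurableSet {a | (toSet (g a)).Infinite} := by
  have : {a | (toSet (g a)).Infinite} = ⋂ m : ℕ, ⋃ n : ℕ, {a | m < n ∧ g a n = true} := by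
    ext a
    simp only [mem_setOf_eq, mem_iInter, mem_iUnion, Set.infinite_iff_exists_gt, toSet]
    constructor
    · intro h m; obtain ⟨n, h1, h2⟩ := h m; exact ⟨n, h2, h1⟩
    · intro h m; obtain ⟨n, h1, h2⟩ := h m; exact ⟨n, h2, h1⟩
  rw [this]
  refine MeasurableSet.iInter fun m => MeasurableSet.iUnion fun n => ?_
  exact (MeasurableSet.const _).inter (meas_app hg n true)

noncomputable def mn (x : Cantor) : ℕ := sInf (toSet x)

theorem mn_mem {x : Cantor} (h : (toSet x).Infinite) : mn x ∈ toSet x := Nat.sInf_mem h.nonempty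

theorem meas_mn : Measurable mn := by
  refine measurable_to_countable' fun k => ?_
  have : mn ⁻¹' {k} = {x : Cantor | (x k = true ∧ ∀ j < k, ¬ x j = true) ∨ (k = 0 ∧ ∀ j, ¬ x j = true)} := by
    ext x
    simp only [mem_preimage, mem_singleton_iff, mem_setOf_eq]
    constructor
    · intro h
      by_cases he : (toSet x).Nonempty
      · left
        have := Nat.sInf_mem he
        unfold mn at h
        rw [h] at this
        refine ⟨this, fun j hj hx => ?_⟩
        have : sInf (toSet x) ≤ j := Nat.sInf_le hx
        omega
      · right
        rw [Set.not_nonempty_iff_eq_empty] at he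
        refine ⟨by rw [← h, mn, he]; simp, fun j hj => ?_⟩
        have : j ∈ toSet x := hj
        rw [he] at this; exact this
    · rintro (⟨h1, h2⟩ | ⟨h1, h2⟩)
      · apply le_antisymm
        · exact Nat.sInf_le h1
        · by_contra hlt
          exact h2 _ (not_le.1 hlt) (Nat.sInf_mem (s := toSet x) ⟨k, h1⟩)
      · have : toSet x = ∅ := by ext j; simp [toSet, h2 j]
        rw [mn, this, h1]; simp
  rw [this]
  have h1 : ∀ k : ℕ, MeasurableSet {x : Cantor | x k = true} := meas_coord
  measurability

noncomputable def tl (x : Cantor) : Cantor := fun k => x k && decide (mn x < k)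

theorem meas_tl : Measurable tl := by
  refine meas_to_cantor _ fun k => ?_
  have : {a | tl a k = true} = {a : Cantor | a k = true} ∩ mn ⁻¹' (Set.Iio k) := by
    ext a; simp [tl]
  rw [this]
  exact (meas_coord k).inter (meas_mn (measurableSet_Iio))

theorem mem_tl {x : Cantor} {k : ℕ} : k ∈ toSet (tl x) ↔ k ∈ toSet x ∧ mn x < k := by
  simp [toSet, tl]

theorem inf_tl {x : Cantor} (h : (toSet x).Infinite) : (toSet (tl x)).Infinite := by
  have : toSet (tl x) = toSet x \ Set.Iic (mn x) := by
    ext k; rw [mem_tl]; simp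
  rw [this]
  exact h.diff (Set.finite_Iic _)

noncomputable def XX (S : ℕ → Cantor × Cantor → Cantor) : ℕ → Cantor × Cantor → Cantor
  | 0, p => p.2
  | i+1, p => S (mn (XX S i p)) (p.1, tl (XX S i p))

theorem meas_XX {S : ℕ → Cantor × Cantor → Cantor} (hS : ∀ n, Measurable (S n)) (i : ℕ) :
    Measurable (XX S i) := by
  induction i with
  | zero => exact measurable_snd
  | succ i ih =>
    refine meas_to_cantor _ fun k => ?_
    have : {p | XX S (i+1) p k = true} = ⋃ n : ℕ, ({p | mn (XX S i p) = n} ∩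
        {p | S n (p.1, tl (XX S i p)) k = true}) := by
      ext p; simp [XX]
    rw [this]
    refine MeasurableSet.iUnion fun n => MeasurableSet.inter ?_ ?_
    · exact (meas_mn.comp ih) (measurableSet_singleton n)
    · exact meas_app ((hS n).comp (measurable_fst.prodMk (meas_tl.comp ih))) k true

open Classical in
noncomputable def YY (B : Set (Finset ℕ)) (s : Finset ℕ) (S : ℕ → Cantor × Cantor → Cantor)
    (c : Bool) (p : Cantor × Cantor) : Cantor := fun k =>
  decide (∃ i, mn (XX S i p) = k ∧ HH B p.1 (insert k s) (XX S (i+1) p) c)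

theorem meas_YY (B : Set (Finset ℕ)) (s : Finset ℕ) {S : ℕ → Cantor × Cantor → Cantor}
    (hS : ∀ n, Measurable (S n)) (c : Bool) : Measurable (YY B s S c) := by
  refine meas_to_cantor _ fun k => ?_
  have : {p | YY B s S c p k = true} = ⋃ i : ℕ, ({p | mn (XX S i p) = k} ∩
        {p | HH B p.1 (insert k s) (XX S (i+1) p) c}) := by
      ext p; simp [YY]
  rw [this]
  refine MeasurableSet.iUnion fun n => MeasurableSet.inter ?_ ?_
  · exact (meas_mn.comp (meas_XX hS n)) (measurableSet_singleton k)
  · exact meas_HH B measurable_fst (meas_XX hS _) _ _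

theorem PP_base {B : Set (Finset ℕ)} (hB : IsFrontOn B Set.univ) {s : Finset ℕ} (hs : s ∈ B) :
    PP B s := by
  refine ⟨fun p => p.2, measurable_snd, fun f x hx hlt => ⟨subset_rfl, hx, f (Encodable.encode s), ?_⟩⟩
  intro t ht hst
  have : s = s ∪ t := by
    refine hB.2.1 s hs _ hst ⟨s.sup id, ?_⟩
    ext k
    simp only [Finset.mem_inter, Finset.mem_union, Finset.mem_Iic]
    constructor
    · intro hk; exact ⟨Or.inl hk, Finset.le_sup (f := id) hk⟩
    · rintro ⟨h | h, h2⟩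
      · exact h
      · have := hlt k (ht k h); omega
  rw [← this]

theorem PP_step {B : Set (Finset ℕ)} {s : Finset ℕ} (hs : s ∉ B)
    (h : ∀ n, s.sup id < n → PP B (insert n s)) : PP B s := by
  have h' : ∀ n, ∃ S : Cantor × Cantor → Cantor, Measurable S ∧ (s.sup id < n → 
    ∀ f x : Cantor, (toSet x).Infinite →
    (∀ m ∈ toSet x, n < m) →
    toSet (S (f, x)) ⊆ toSet x ∧ (toSet (S (f, x))).Infinite ∧
      ∃ c, HH B f (insert n s) (S (f, x)) c) := by
    intro n
    by_cases hn : s.sup id < n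
    · obtain ⟨S, hS, hS2⟩ := h n hn
      refine ⟨S, hS, fun _ f x hx hm => hS2 f x hx fun m hmm => ?_⟩
      have := hm m hmm
      simp only [Finset.sup_insert, id, sup_lt_iff]
      exact ⟨this, hn.trans this⟩
    · exact ⟨fun p => p.2, measurable_snd, fun h => absurd h hn⟩
  choose S hS hS2 using h'
  classical
  refine ⟨fun p => if (toSet (YY B s S true p)).Infinite then YY B s S true p else YY B s S false p,
    Measurable.ite (meas_inf (meas_YY B s hS true)) (meas_YY B s hS true) (meas_YY B s hS false), ?_⟩
  intro f x hx hlt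
  have hX : ∀ i, (toSet (XX S i (f, x))).Infinite ∧ (toSet (XX S i (f, x)) ⊆ toSet x) := by
    intro i
    induction i with
    | zero => exact ⟨hx, subset_rfl⟩
    | succ i ih =>
      have := hS2 (mn (XX S i (f, x))) (hlt _ (ih.2 (mn_mem ih.1))) f (tl (XX S i (f, x)))
        (inf_tl ih.1) (fun m hm => (mem_tl.1 hm).2)
      exact ⟨this.2.1, this.1.trans fun m hm => ih.2 (mem_tl.1 hm).1⟩
  have hX1 : ∀ i, toSet (XX S (i+1) (f, x)) ⊆ toSet (tl (XX S i (f, x))) ∧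
      ∃ c, HH B f (insert (mn (XX S i (f, x))) s) (XX S (i+1) (f, x)) c := by
    intro i
    have := hS2 (mn (XX S i (f, x))) (hlt _ ((hX i).2 (mn_mem (hX i).1))) f (tl (XX S i (f, x)))
        (inf_tl (hX i).1) (fun m hm => (mem_tl.1 hm).2)
    exact ⟨this.1, this.2.2⟩
  set N : ℕ → ℕ := fun i => mn (XX S i (f, x)) with hN
  have hmono : StrictMono N := by
    refine strictMono_nat_of_lt_succ fun i => ?_
    exact (mem_tl.1 ((hX1 i).1 (mn_mem (hX (i+1)).1))).2
  have hanti : ∀ i d, toSet (XX S (i+d) (f, x)) ⊆ toSet (XX S i (f, x)) := by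
    intro i d
    induction d with
    | zero => exact subset_rfl
    | succ d ih => exact fun m hm => ih (mem_tl.1 ((hX1 (i+d)).1 hm)).1
  have hYsub : ∀ c, toSet (YY B s S c (f, x)) ⊆ toSet x := by
    intro c k hk
    simp only [toSet, YY, decide_eq_true_eq, mem_setOf_eq] at hk
    obtain ⟨i, rfl, _⟩ := hk
    exact (hX i).2 (mn_mem (hX i).1)
  have hYH : ∀ c, HH B f s (YY B s S c (f, x)) c := by
    intro c t ht htB
    have hne : t.Nonempty := by
      by_contra hne
      rw [Finset.not_nonempty_iff_eq_empty] at hne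
      subst hne
      simp at htB; exact hs htB
    have h0 := ht _ (t.min'_mem hne)
    simp only [YY, decide_eq_true_eq] at h0
    obtain ⟨i, hi, hH⟩ := h0
    set k := t.min' hne with hk
    have e : insert k s ∪ (t.erase k) = s ∪ t := by
      have : k ∈ t := t.min'_mem hne
      ext a
      simp only [Finset.mem_union, Finset.mem_insert, Finset.mem_erase]
      by_cases hak : a = k
      · subst hak; simp [this]
      · simp [hak]
    have := hH (t.erase k) ?_ (by rw [e]; exact htB)
    · rw [e] at this; exact this
    · intro n hn
      rw [Finset.mem_erase] at hn
      have hkn : k < n := lt_of_le_of_ne (t.min'_le n hn.2) (Ne.symm hn.1)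
      have h1 := ht n hn.2
      simp only [YY, decide_eq_true_eq] at h1
      obtain ⟨j, hj, _⟩ := h1
      have hij : i < j := by
        rw [← hmono.lt_iff_lt]
        simp only [hN]
        omega
      obtain ⟨d, rfl⟩ := Nat.exists_eq_add_of_lt hij
      have := hanti (i+1) d (a := n) (by
        rw [← hj, show i + d + 1 = i + 1 + d by ring]
        exact mn_mem (hX _).1)
      exact this
  have hinf : (toSet (YY B s S true (f, x))).Infinite ∨ (toSet (YY B s S false (f, x))).Infinite := by
    rw [← Set.infinite_union]
    refine (Set.infinite_range_of_injective hmono.injective).mono ?_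
    rintro _ ⟨i, rfl⟩
    obtain ⟨c, hc⟩ := (hX1 i).2
    cases c
    · right
      simp only [toSet, YY, decide_eq_true_eq, mem_setOf_eq]
      exact ⟨i, rfl, hc⟩
    · left
      simp only [toSet, YY, decide_eq_true_eq, mem_setOf_eq]
      exact ⟨i, rfl, hc⟩
  by_cases hc : (toSet (YY B s S true (f, x))).Infinite
  · simp only [hc, if_true]
    exact ⟨hYsub _, trivial, _, hYH _⟩
  · simp only [hc, if_false]
    exact ⟨hYsub _, hinf.resolve_left hc, _, hYH _⟩

theorem PP_empty {B : Set (Finset ℕ)} (hB : IsFrontOn B Set.univ) : PP B ∅ := by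
  by_contra hcon
  have hst : ∀ s : {s // ¬ PP B s}, ∃ n, s.1.sup id < n ∧ ¬ PP B (insert n s.1) := by
    rintro ⟨s, hs⟩
    by_contra hn
    push Not at hn
    exact hs (PP_step (fun hsB => hs (PP_base hB hsB)) hn)
  choose nx hnx using hst
  let sq : ℕ → {s // ¬ PP B s} := fun i =>
    Nat.rec ⟨∅, hcon⟩ (fun _ s => ⟨insert (nx s) s.1, (hnx s).2⟩) i
  let a : ℕ → ℕ := fun i => nx (sq i)
  have hsucc : ∀ i, (sq (i+1)).1 = insert (a i) (sq i).1 := fun i => rfl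
  have hsq : ∀ i, (sq i).1 = (Finset.range i).image a := by
    intro i
    induction i with
    | zero => rfl
    | succ i ih => rw [hsucc, ih, Finset.range_add_one, Finset.image_insert]
  have hmono : StrictMono a := by
    refine strictMono_nat_of_lt_succ fun i => ?_
    refine lt_of_le_of_lt ?_ (hnx (sq (i+1))).1
    refine Finset.le_sup (f := id) ?_
    rw [hsucc]; exact Finset.mem_insert_self _ _
  obtain ⟨t, htB, m, htm⟩ := hB.2.2 (Set.range a) (subset_univ _)
    (Set.infinite_range_of_injective hmono.injective)
  have hex : ∃ i, m < a i := ⟨m+1, lt_of_lt_of_le (Nat.lt_succ_self m) (hmono.le_apply)⟩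
  classical
  have : (sq (Nat.find hex)).1 = t := by
    rw [hsq]
    apply Finset.coe_injective
    rw [htm]
    ext k
    simp only [Finset.coe_image, Finset.coe_range, mem_image, mem_Iio, mem_inter_iff, mem_range, mem_Iic]
    constructor
    · rintro ⟨i, hi, rfl⟩
      exact ⟨⟨i, rfl⟩, not_lt.1 (Nat.find_min hex hi)⟩
    · rintro ⟨⟨i, rfl⟩, hi⟩
      refine ⟨i, ?_, rfl⟩
      by_contra hle
      have := hmono.monotone (not_lt.1 hle)
      have := Nat.find_spec hex
      omega
  exact (sq (Nat.find hex)).2 (this ▸ PP_base hB htB)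

/-- code of `f ↾ k` -/
def cd (f : Cantor) : ℕ → ℕ
  | 0 => 1
  | k+1 => 2 * cd f k + (f k).toNat

theorem cd_pos (f : Cantor) (k : ℕ) : 0 < cd f k := by
  induction k with
  | zero => simp [cd]
  | succ k ih => simp only [cd]; omega

theorem cd_mono (f : Cantor) : StrictMono (cd f) := by
  refine strictMono_nat_of_lt_succ fun k => ?_
  have := cd_pos f k
  simp only [cd]; omega

theorem cd_inj (f g : Cantor) (k l : ℕ) (h : cd f k = cd g l) : k = l ∧ ∀ i < k, f i = g i := by
  induction k generalizing l with
  | zero =>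
    cases l with
    | zero => simp
    | succ l => have := cd_pos g l; simp only [cd] at h; omega
  | succ k ih =>
    cases l with
    | zero => have := cd_pos f k; simp only [cd] at h; omega
    | succ l =>
      simp only [cd] at h
      have h1 := Bool.toNat_le (f k)
      have h2 := Bool.toNat_le (g l)
      obtain ⟨rfl, h3⟩ := ih l (by omega)
      refine ⟨rfl, fun i hi => ?_⟩
      rcases Nat.lt_succ_iff_lt_or_eq.1 hi with hi | rfl
      · exact h3 i hi
      · have : (f i).toNat = (g i).toNat := by omega
        revert this
        cases f i <;> cases g i <;> simp

theorem meas_cd (k : ℕ) : Measurable (fun f => cd f k) := by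
  induction k with
  | zero => exact measurable_const
  | succ k ih =>
    simp only [cd]
    refine (ih.const_mul 2).add ?_
    exact (measurable_of_countable Bool.toNat).comp (measurable_pi_apply k)

open Classical in
noncomputable def DD (f : Cantor) : Cantor := fun n => decide (∃ k, cd f k = n)

theorem toSet_DD (f : Cantor) : toSet (DD f) = Set.range (cd f) := by
  ext n; simp [toSet, DD]

theorem meas_DD : Measurable DD := by
  refine meas_to_cantor _ fun n => ?_
  have : {f | DD f n = true} = ⋃ k, (fun f => cd f k) ⁻¹' {n} := by
    ext f; simp [DD]
  rw [this]
  exact MeasurableSet.iUnion fun k => meas_cd k (measurableSet_singleton n)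

theorem DD_ad {f g : Cantor} (h : f ≠ g) : (toSet (DD f) ∩ toSet (DD g)).Finite := by
  obtain ⟨i, hi⟩ := Function.ne_iff.1 h
  refine (Set.finite_Iic (cd f i)).subset ?_
  rw [toSet_DD, toSet_DD]
  rintro n ⟨⟨k, rfl⟩, ⟨l, hl⟩⟩
  obtain ⟨rfl, h3⟩ := cd_inj f g _ _ hl.symm
  refine (cd_mono f).monotone ?_
  by_contra hk
  exact hi (h3 i (not_le.1 hk))

/-- number of elements of `x` below `m` -/
def ct (x : Cantor) (m : ℕ) : ℕ := ((Finset.range m).filter (fun i => x i = true)).card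

def an (x y : Cantor) : Cantor := fun n => x n && y n

theorem toSet_an (x y : Cantor) : toSet (an x y) = toSet x ∩ toSet y := by
  ext n; simp [toSet, an]

def JJ (x y : Cantor) : Prop := ∃ K : ℕ, ∀ m, ct (an x y) m ^ 2 ≤ K * ct y m

theorem ct_mono {x y : Cantor} (h : toSet x ⊆ toSet y) (m : ℕ) : ct x m ≤ ct y m := by
  apply Finset.card_le_card
  intro i
  simp only [Finset.mem_filter]
  exact fun hi => ⟨hi.1, h hi.2⟩

theorem ct_mono_right (x : Cantor) {m n : ℕ} (h : m ≤ n) : ct x m ≤ ct x n := by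
  apply Finset.card_le_card
  exact Finset.filter_subset_filter _ (Finset.range_mono h)

theorem JJ_mono {x x' y : Cantor} (h : toSet x' ⊆ toSet x) (hx : JJ x y) : JJ x' y := by
  obtain ⟨K, hK⟩ := hx
  refine ⟨K, fun m => le_trans (Nat.pow_le_pow_left (ct_mono ?_ m) 2) (hK m)⟩
  rw [toSet_an, toSet_an]
  exact inter_subset_inter_left _ h

theorem JJ_union {x x' y : Cantor} (hx : JJ x y) (hx' : JJ x' y) :
    JJ (fun n => x n || x' n) y := by
  obtain ⟨K, hK⟩ := hx
  obtain ⟨L, hL⟩ := hx'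
  refine ⟨2 * K + 2 * L, fun m => ?_⟩
  have h : ct (an (fun n => x n || x' n) y) m ≤ ct (an x y) m + ct (an x' y) m := by
    refine le_trans (Finset.card_le_card ?_) (Finset.card_union_le _ _)
    intro i
    simp only [Finset.mem_filter, Finset.mem_union, an, Bool.and_eq_true, Bool.or_eq_true]
    tauto
  have h1 := hK m
  have h2 := hL m
  have h3 := Nat.pow_le_pow_left h 2
  zify at *
  nlinarith [sq_nonneg ((ct (an x y) m : ℤ) - ct (an x' y) m)]

theorem ct_unbdd {y : Cantor} (hy : (toSet y).Infinite) (K : ℕ) : ∃ m, K ≤ ct y m := by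
  obtain ⟨t, ht, hc⟩ := hy.exists_subset_card_eq K
  refine ⟨t.sup id + 1, ?_⟩
  rw [← hc]
  apply Finset.card_le_card
  intro i hi
  simp only [Finset.mem_filter, Finset.mem_range]
  exact ⟨Nat.lt_succ_of_le (Finset.le_sup (f := id) hi), ht hi⟩

theorem not_JJ_self {y : Cantor} (hy : (toSet y).Infinite) : ¬ JJ y y := by
  rintro ⟨K, hK⟩
  obtain ⟨m, hm⟩ := ct_unbdd hy (K+1)
  have := hK m
  have e : an y y = y := by ext n; simp [an]
  rw [e] at this
  nlinarith

theorem JJ_finite {x y : Cantor} (h : (toSet x ∩ toSet y).Finite) : JJ x y := by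
  refine ⟨h.toFinset.card, fun m => ?_⟩
  have h1 : ct (an x y) m ≤ h.toFinset.card := by
    apply Finset.card_le_card
    intro i hi
    simp only [Finset.mem_filter] at hi
    rw [Set.Finite.mem_toFinset, ← toSet_an]
    exact hi.2
  have h2 : ct (an x y) m ≤ ct y m := ct_mono (by rw [toSet_an]; exact inter_subset_right) m
  rw [sq]
  exact Nat.mul_le_mul h1 h2

theorem JJ_tall {x y : Cantor} (h : (toSet x ∩ toSet y).Infinite) :
    ∃ z : Cantor, (toSet z).Infinite ∧ toSet z ⊆ toSet x ∩ toSet y ∧ JJ z y := by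
  have hy : (toSet y).Infinite := h.mono inter_subset_right
  have hP : ∀ k : ℕ, ∃ᶠ n in Filter.atTop, n ∈ toSet x ∩ toSet y ∧ (k+1)^2 ≤ ct y n := by
    intro k
    obtain ⟨m, hm⟩ := ct_unbdd hy ((k+1)^2)
    have h1 : ∃ᶠ n in Filter.atTop, n ∈ toSet x ∩ toSet y := Nat.frequently_atTop_iff_infinite.2 h
    refine (h1.and_eventually (Filter.eventually_ge_atTop m)).mono ?_
    rintro n ⟨h2, h3⟩
    exact ⟨h2, hm.trans (ct_mono_right y h3)⟩
  obtain ⟨φ, hφ, hφ2⟩ := Filter.extraction_forall_of_frequently hP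
  classical
  let z : Cantor := fun n => decide (n ∈ Set.range φ)
  have hz : toSet z = Set.range φ := by ext n; simp [toSet, z]
  have hsub : toSet z ⊆ toSet x ∩ toSet y := by
    rw [hz]; rintro _ ⟨k, rfl⟩; exact (hφ2 k).1
  refine ⟨z, ?_, hsub, 1, fun m => ?_⟩
  · rw [hz]; exact Set.infinite_range_of_injective hφ.injective
  · have h0 : ct (an z y) m ≤ ct z m := ct_mono (by rw [toSet_an]; exact inter_subset_left) m
    refine le_trans (Nat.pow_le_pow_left h0 2) ?_
    rw [one_mul]
    rcases hj : ct z m with _ | j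
    · simp
    · have hlt : φ j < m := by
        by_contra hge
        have : ct z m ≤ j := by
          calc ct z m ≤ ((Finset.range j).image φ).card := by
                apply Finset.card_le_card
                intro i hi
                simp only [Finset.mem_filter, Finset.mem_range] at hi
                have h5 : i ∈ toSet z := hi.2
                rw [hz] at h5
                obtain ⟨k, rfl⟩ := h5
                refine Finset.mem_image_of_mem _ (Finset.mem_range.2 ?_)
                rw [← hφ.lt_iff_lt]; omega
            _ ≤ j := by simpa using Finset.card_image_le (s := Finset.range j) (f := φ)
        omega
      exact (hφ2 j).2.trans (ct_mono_right y hlt.le)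

theorem meas_ct (m : ℕ) : Measurable (fun x => ct x m) := by
  have : (fun x => ct x m) = fun x : Cantor => ∑ i ∈ Finset.range m, (x i).toNat := by
    ext x
    rw [ct, Finset.card_filter]
    refine Finset.sum_congr rfl fun i _ => ?_
    cases x i <;> simp
  rw [this]
  refine Finset.measurable_sum _ fun i _ => ?_
  exact (measurable_of_countable Bool.toNat).comp (measurable_pi_apply i)

theorem meas_an {α : Type*} [MeasurableSpace α] {g h : α → Cantor}
    (hg : Measurable g) (hh : Measurable h) : Measurable (fun a => an (g a) (h a)) := by
  refine meas_to_cantor _ fun k => ?_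
  have : {a | an (g a) (h a) k = true} = {a | g a k = true} ∩ {a | h a k = true} := by
    ext a; simp [an]
  rw [this]
  exact (meas_app hg k true).inter (meas_app hh k true)

theorem meas_JJ {α : Type*} [MeasurableSpace α] {g h : α → Cantor}
    (hg : Measurable g) (hh : Measurable h) : MeasurableSet {a | JJ (g a) (h a)} := by
  unfold JJ
  simp only [setOf_exists, setOf_forall]
  refine MeasurableSet.iUnion fun K => MeasurableSet.iInter fun m => ?_
  refine measurableSet_le ?_ ?_
  · exact (measurable_of_countable (fun n : ℕ => n ^ 2)).comp ((meas_ct m).comp (meas_an hg hh))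
  · exact ((meas_ct m).comp hh).const_mul K

/-- For every front `B` on `ℕ` there is a tall coanalytic ideal `I` such that
`hom(F) ⊄ I` for every `F ⊆ B`. -/
theorem coanalytic_tall_ideal_avoiding_homs (B : Set (Finset ℕ))
    (hB : IsFrontOn B Set.univ) :
    ∃ I : Set Cantor, IsIdeal I ∧ Tall I ∧ MeasureTheory.AnalyticSet Iᶜ ∧
      ∀ F : Set (Finset ℕ), F ⊆ B →
        ¬ ({y : Cantor | (toSet y).Infinite ∧ Homog F (toSet y)} ⊆ I) := by
  obtain ⟨S, hS, hS2⟩ := PP_empty hB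
  let Y : Cantor → Cantor := fun f => S (f, DD f)
  have hYm : Measurable Y := hS.comp (measurable_id.prodMk meas_DD)
  have hY : ∀ f, toSet (Y f) ⊆ toSet (DD f) ∧ (toSet (Y f)).Infinite ∧ ∃ c, HH B f ∅ (Y f) c := by
    intro f
    refine hS2 f (DD f) ?_ ?_
    · rw [toSet_DD]; exact Set.infinite_range_of_injective (cd_mono f).injective
    · rw [toSet_DD]; rintro _ ⟨k, rfl⟩; simpa using cd_pos f k
  refine ⟨{x | ∀ f, JJ x (Y f)}, ⟨?_, ?_⟩, ?_, ?_, ?_⟩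
  · exact fun x hx y hyx f => JJ_mono hyx (hx f)
  · exact fun x hx y hy f => JJ_union (hx f) (hy f)
  · intro x hx
    by_cases hex : ∃ f, (toSet x ∩ toSet (Y f)).Infinite
    · obtain ⟨f, hf⟩ := hex
      obtain ⟨z, hz, hzs, hzJ⟩ := JJ_tall hf
      refine ⟨z, fun g => ?_, hz, hzs.trans inter_subset_left⟩
      by_cases hgf : f = g
      · exact hgf ▸ hzJ
      · refine JJ_finite ((DD_ad hgf).subset ?_)
        exact inter_subset_inter ((hzs.trans inter_subset_right).trans (hY f).1) (hY g).1
    · push Not at hex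
      exact ⟨x, fun f => JJ_finite (hex f), hx, subset_rfl⟩
  · have : {x | ∀ f, JJ x (Y f)}ᶜ = Prod.fst '' {p : Cantor × Cantor | JJ p.1 (Y p.2)}ᶜ := by
      ext x; simp
    rw [this]
    haveI : PolishSpace Bool := inferInstance
    haveI : PolishSpace Cantor := inferInstanceAs (PolishSpace (ℕ → Bool))
    haveI : PolishSpace (Cantor × Cantor) := inferInstance
    exact ((meas_JJ measurable_fst (hYm.comp measurable_snd)).compl.analyticSet).image_of_continuous
      continuous_fst
  · intro F hF hsub
    classical
    let f : Cantor := fun n => decide (∃ s ∈ F, Encodable.encode s = n)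
    have hf : ∀ s, f (Encodable.encode s) = true ↔ s ∈ F := by
      intro s; simp [f]
    obtain ⟨h1, h2, c, hc⟩ := hY f
    refine not_JJ_self h2 (hsub (a := Y f) ⟨h2, ?_⟩ f)
    have hc' : ∀ s : Finset ℕ, (s : Set ℕ) ⊆ toSet (Y f) → s ∈ B → f (Encodable.encode s) = c := by
      intro s hs hsB
      have := hc s (fun n hn => hs hn) (by simpa using hsB)
      simpa using this
    cases c
    · right
      intro s hs hsF
      have := hc' s hs (hF hsF)
      rw [(hf s).2 hsF] at this
      exact absurd this (by simp)
    · left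
      intro z hz hzi
      obtain ⟨s, hsB, n, hn⟩ := hB.2.2 z (subset_univ _) hzi
      refine ⟨s, (hf s).1 (hc' s ?_ hsB), n, hn⟩
      rw [hn]
      exact inter_subset_left.trans hz
end

section
/- There is a tall ideal I on ℕ which is Π¹₂ as a subset of the Cantor space 2^ℕ and such that for every x ∈ I⁺ and every family F of finite subsets of ℕ there is an infinite y ⊆ x with y F-homogeneous and y ∈ I⁺. In particular, I does not contain any closed hereditary tall subset of 2^ℕ. -/
open Set

/-! ### Galvin's lemma -/

/-- the part of `M` strictly above the finite set `s` -/
def above (s : Finset ℕ) (M : Set ℕ) : Set ℕ := {n | n ∈ M ∧ ∀ a ∈ s, a < n}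

lemma above_infinite (s : Finset ℕ) {M : Set ℕ} (hM : M.Infinite) : (above s M).Infinite := by
  have : M \ Set.Iic (s.sup id) ⊆ above s M := by
    intro n hn
    refine ⟨hn.1, fun a ha => ?_⟩
    have h1 : a ≤ s.sup id := Finset.le_sup (f := id) ha
    have h2 : ¬ n ≤ s.sup id := hn.2
    omega
  exact (hM.sdiff (Set.finite_Iic _)).mono this

lemma above_subset (s : Finset ℕ) (M : Set ℕ) : above s M ⊆ M := fun _ h => h.1

lemma dec_finite (Dec : Finset ℕ → Set ℕ → Prop) (X : Set ℕ)
    (hered : ∀ s M N, N ⊆ M → N.Infinite → Dec s M → Dec s N)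
    (dense : ∀ s M, M ⊆ X → M.Infinite → ∃ N, N ⊆ M ∧ N.Infinite ∧ Dec s N)
    (A : Finset (Finset ℕ)) : ∀ M, M ⊆ X → M.Infinite →
      ∃ N, N ⊆ M ∧ N.Infinite ∧ ∀ s ∈ A, Dec s N := by
  induction A using Finset.induction_on with
  | empty => intro M _ hi; exact ⟨M, subset_rfl, hi, by simp⟩
  | insert a A _ ih =>
    intro M hM hi
    obtain ⟨N, hNM, hN, h⟩ := ih M hM hi
    obtain ⟨N', hN', hi', h'⟩ := dense a N (hNM.trans hM) hN
    refine ⟨N', hN'.trans hNM, hi', ?_⟩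
    intro s hs
    rcases Finset.mem_insert.1 hs with rfl | hs
    · exact h'
    · exact hered _ _ _ hN' hi' (h s hs)

lemma fusion (Dec : Finset ℕ → Set ℕ → Prop) (X : Set ℕ) (hX : X.Infinite)
    (hered : ∀ s M N, N ⊆ M → N.Infinite → Dec s M → Dec s N)
    (dense : ∀ s M, M ⊆ X → M.Infinite → ∃ N, N ⊆ M ∧ N.Infinite ∧ Dec s N) :
    ∃ M, M ⊆ X ∧ M.Infinite ∧ ∀ s : Finset ℕ, (s : Set ℕ) ⊆ M → Dec s (above s M) := by
  obtain ⟨N0, hN0, hi0, hd0⟩ := dense ∅ X subset_rfl hX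
  have step : ∀ M : {M : Set ℕ // M ⊆ X ∧ M.Infinite}, ∃ N : {M : Set ℕ // M ⊆ X ∧ M.Infinite},
      N.1 ⊆ M.1 ∧ (∀ n ∈ N.1, sInf M.1 < n) ∧
      ∀ s ∈ (Finset.Iic (sInf M.1)).powerset, Dec s N.1 := by
    intro M
    obtain ⟨N, h1, h2, h3⟩ := dec_finite Dec X hered dense (Finset.Iic (sInf M.1)).powerset
      (M.1 \ Set.Iic (sInf M.1)) (Set.sdiff_subset.trans M.2.1) (M.2.2.sdiff (Set.finite_Iic _))
    refine ⟨⟨N, h1.trans (Set.sdiff_subset.trans M.2.1), h2⟩, h1.trans Set.sdiff_subset, ?_, h3⟩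
    intro n hn
    have := (h1 hn).2
    simpa using this
  choose f hf1 hf2 hf3 using step
  let S : ℕ → {M : Set ℕ // M ⊆ X ∧ M.Infinite} := fun n => f^[n] ⟨N0, hN0, hi0⟩
  have hS : ∀ n, S (n+1) = f (S n) := fun n => Function.iterate_succ_apply' f n _
  have hmono : ∀ m n, m ≤ n → (S n).1 ⊆ (S m).1 := by
    intro m n h
    induction h with
    | refl => exact subset_rfl
    | step h ih => rw [hS]; exact (hf1 _).trans ih
  let m : ℕ → ℕ := fun n => sInf (S n).1
  have hm : ∀ n, m n ∈ (S n).1 := fun n => Nat.sInf_mem (S n).2.2.nonempty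
  have hmm : StrictMono m := by
    refine strictMono_nat_of_lt_succ fun n => ?_
    have := hm (n+1)
    rw [hS] at this
    exact hf2 _ _ this
  refine ⟨Set.range m, ?_, Set.infinite_range_of_injective hmm.injective, ?_⟩
  · rintro _ ⟨n, rfl⟩
    exact (S n).2.1 (hm n)
  · intro s hs
    have hinf := above_infinite s (Set.infinite_range_of_injective hmm.injective)
    rcases s.eq_empty_or_nonempty with rfl | hne
    · refine hered _ N0 _ ?_ hinf hd0
      rintro _ ⟨⟨n, rfl⟩, _⟩
      exact hmono 0 n (Nat.zero_le _) (hm n)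
    · obtain ⟨i, hi⟩ := hs (s.max'_mem hne)
      refine hered _ (S (i+1)).1 _ ?_ hinf ?_
      · rintro _ ⟨⟨n, rfl⟩, h⟩
        have := h _ (s.max'_mem hne)
        rw [← hi] at this
        exact hmono _ _ (hmm.lt_iff_lt.1 this) (hm n)
      · rw [hS]
        refine hf3 _ s ?_
        rw [Finset.mem_powerset]
        intro a ha
        rw [Finset.mem_Iic]
        have := s.le_max' a ha
        rw [← hi] at this
        exact this

def acc (F : Set (Finset ℕ)) (s : Finset ℕ) (M : Set ℕ) : Prop :=
  ∀ Z : Set ℕ, Z ⊆ M → Z.Infinite → (∀ a ∈ s, ∀ b ∈ Z, a < b) → ∃ t ∈ F, InitSeg t (↑s ∪ Z)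

lemma galvin (F : Set (Finset ℕ)) (X : Set ℕ) (hX : X.Infinite) :
    ∃ y, y ⊆ X ∧ y.Infinite ∧ Homog F y := by
  have hX' : (X \ {0}).Infinite := hX.sdiff (Set.finite_singleton 0)
  obtain ⟨M, hMX, hM, hMd⟩ := fusion
    (fun s M => acc F s M ∨ ∀ N, N ⊆ M → N.Infinite → ¬ acc F s N) (X \ {0}) hX'
    (by
      intro s M N hNM _ h
      rcases h with h | h
      · exact Or.inl fun Z hZ => h Z (hZ.trans hNM)
      · exact Or.inr fun N' hN' => h N' (hN'.trans hNM))
    (by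
      intro s M _ hi
      by_cases h : ∃ N, N ⊆ M ∧ N.Infinite ∧ acc F s N
      · obtain ⟨N, h1, h2, h3⟩ := h
        exact ⟨N, h1, h2, Or.inl h3⟩
      · push Not at h
        exact ⟨M, subset_rfl, hi, Or.inr h⟩)
  by_cases h0 : acc F ∅ M
  · refine ⟨M, hMX.trans Set.sdiff_subset, hM, Or.inl ?_⟩
    intro z hz hzi
    obtain ⟨t, ht, h⟩ := h0 z hz hzi (by simp)
    exact ⟨t, ht, by simpa using h⟩
  -- the rejecting case
  have key : ∀ s : Finset ℕ, (s : Set ℕ) ⊆ M → ¬ acc F s (above s M) →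
      ∀ N, N ⊆ above s M → N.Infinite → ¬ acc F s N := by
    intro s hs h
    exact (hMd s hs).resolve_left h
  obtain ⟨y, hyM, hy, hyd⟩ := fusion
    (fun s N => (s : Set ℕ) ⊆ M → ¬ acc F s (above s M) →
      ∀ n ∈ N, n ∈ above s M → ¬ acc F (insert n s) (above (insert n s) M)) M hM
    (by
      intro s A B hBA _ h h1 h2 n hn
      exact h h1 h2 n (hBA hn))
    (by
      intro s A hA hAi
      by_cases h1 : (s : Set ℕ) ⊆ M
      swap
      · exact ⟨A, subset_rfl, hAi, fun h => absurd h h1⟩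
      by_cases h2 : acc F s (above s M)
      · exact ⟨A, subset_rfl, hAi, fun _ h => absurd h2 h⟩
      have hfin : {n | n ∈ above s M ∧ acc F (insert n s) (above (insert n s) M)}.Finite := by
        by_contra hinf
        refine key s h1 h2 _ (fun n hn => hn.1) hinf ?_
        intro Z hZ hZi hab
        have hmin := Nat.sInf_mem hZi.nonempty
        obtain ⟨t, ht, hseg⟩ := (hZ hmin).2 (Z \ {sInf Z}) (by
          intro b hb
          refine ⟨(hZ hb.1).1.1, ?_⟩
          intro a ha
          rcases Finset.mem_insert.1 ha with rfl | ha
          · exact lt_of_le_of_ne (Nat.sInf_le hb.1) (fun h => hb.2 h.symm)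
          · exact hab a ha b hb.1) (hZi.sdiff (Set.finite_singleton _)) (by
          intro a ha b hb
          rcases Finset.mem_insert.1 ha with rfl | ha
          · exact lt_of_le_of_ne (Nat.sInf_le hb.1) (fun h => hb.2 h.symm)
          · exact hab a ha b hb.1)
        refine ⟨t, ht, ?_⟩
        have : (↑(insert (sInf Z) s) : Set ℕ) ∪ Z \ {sInf Z} = ↑s ∪ Z := by
          ext a
          simp only [Finset.coe_insert, Set.mem_union, Set.mem_insert_iff, Set.mem_sdiff,
            Set.mem_singleton_iff]
          constructor
          · rintro ((rfl | h) | h)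
            · exact Or.inr hmin
            · exact Or.inl h
            · exact Or.inr h.1
          · rintro (h | h)
            · exact Or.inl (Or.inr h)
            · by_cases hh : a = sInf Z
              · exact Or.inl (Or.inl hh)
              · exact Or.inr ⟨h, hh⟩
        rwa [this] at hseg
      refine ⟨A \ _, Set.sdiff_subset, hAi.sdiff hfin, ?_⟩
      intro _ _ n hn hn' hacc
      exact hn.2 ⟨hn', hacc⟩)
  have hrej : ∀ s : Finset ℕ, (s : Set ℕ) ⊆ y → ¬ acc F s (above s M) := by
    intro s
    induction s using Finset.induction_on_max with
    | empty =>
      intro _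
      have : above ∅ M = M := by ext; simp [above]
      rwa [this]
    | insert a s hlt ih =>
      intro hs
      have hs' : (s : Set ℕ) ⊆ y := fun b hb => hs (by simp [Finset.mem_coe.1 hb])
      have ha : a ∈ y := hs (by simp)
      exact hyd s hs' (hs'.trans hyM) (ih hs') a ⟨ha, hlt⟩ ⟨hyM ha, hlt⟩
  refine ⟨y, hyM.trans (hMX.trans Set.sdiff_subset), hy, Or.inr ?_⟩
  intro s hs hsF
  refine hrej s hs ?_
  intro Z hZ hZi hab
  refine ⟨s, hsF, s.sup id, ?_⟩
  ext a
  simp only [Set.mem_inter_iff, Set.mem_union, Set.mem_Iic]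
  constructor
  · intro ha
    exact ⟨Or.inl ha, Finset.le_sup (f := id) (Finset.mem_coe.1 ha)⟩
  · rintro ⟨h | h, h'⟩
    · exact h
    · exfalso
      rcases s.eq_empty_or_nonempty with rfl | hne
      · have := (hMX (hZ h).1).2
        simp at h'
        exact this h'
      · obtain ⟨b, hb, hb'⟩ := Finset.exists_mem_eq_sup s hne id
        have := hab b hb a h
        rw [hb'] at h'
        simp only [id] at h'
        omega

/-! ### The coding functions and the canonical homogeneous set -/

/-- code of the restriction of `F` to `k` -/
def cde (F : Cantor) : ℕ → ℕ
  | 0 => 0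
  | k + 1 => Nat.pair (cde F k) (F k).toNat + 1

lemma cde_inj (F F' : Cantor) : ∀ a b, cde F a = cde F' b → a = b ∧ ∀ i < a, F i = F' i := by
  intro a
  induction a with
  | zero =>
    intro b h
    cases b with
    | zero => simp
    | succ b => simp [cde] at h
  | succ a ih =>
    intro b h
    cases b with
    | zero => simp [cde] at h
    | succ b =>
      simp only [cde, Nat.add_right_cancel_iff, Nat.pair_eq_pair] at h
      obtain ⟨rfl, h'⟩ := ih b h.1
      refine ⟨rfl, fun i hi => ?_⟩
      rcases Nat.lt_succ_iff_lt_or_eq.1 hi with hi | rfl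
      · exact h' i hi
      · have := h.2
        revert this
        cases F i <;> cases F' i <;> simp

def SubR (s : Finset ℕ) (y : ℕ → ℕ) : Prop := ∀ a : ℕ, a ∈ s → ∃ k, y k = a

lemma sub_iff (s : Finset ℕ) (y : ℕ → ℕ) : SubR s y ↔ (s : Set ℕ) ⊆ Set.range y :=
  ⟨fun h _ ha => h _ ha, fun h a ha => h (Finset.mem_coe.2 ha)⟩

def EndExt (s t : Finset ℕ) : Prop := InitSegF s t ∧ s ≠ t

def fam (F : Cantor) : Set (Finset ℕ) := {s | F (Encodable.encode s) = true}

/-- the (closed) condition on `(y, ρ)` -/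
def KK (d : ℕ → ℕ) (F : Cantor) (r : ℕ → ℕ → Bool) (y ρ : ℕ → ℕ) : Prop :=
  (∀ k, y k < y (k + 1)) ∧ (∀ k, ∃ j n, cde F j = n ∧ y k = d n) ∧
  ((∀ s : Finset ℕ, SubR s y → F (Encodable.encode s) = false) ∨
   (∀ s t : Finset ℕ, SubR t y → EndExt s t →
      (∀ u : Finset ℕ, InitSegF u t → F (Encodable.encode u) = false) →
      ∃ a b, ρ (Encodable.encode t) = a ∧ ρ (Encodable.encode s) = b ∧ r a b = true))

def LexLT (r : ℕ → ℕ → Bool) (y ρ y' ρ' : ℕ → ℕ) : Prop :=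
  ∃ n, (∀ m, m < n → y m = y' m ∧ ρ m = ρ' m) ∧
    (y n < y' n ∨ (y n = y' n ∧ ∃ a b, ρ n = a ∧ ρ' n = b ∧ r a b = true))

def LinO (r : ℕ → ℕ → Bool) : Prop :=
  (∀ a, r a a = false) ∧ (∀ a b c, r a b = true → r b c = true → r a c = true) ∧
  (∀ a b, r a b = true ∨ a = b ∨ r b a = true)

def WO (r : ℕ → ℕ → Bool) : Prop :=
  LinO r ∧ ∀ f : ℕ → ℕ, ∃ n a b, f (n + 1) = a ∧ f n = b ∧ r a b = false

def Phi (d : ℕ → ℕ) (F : Cantor) (y : ℕ → ℕ) (r : ℕ → ℕ → Bool) (ρ : ℕ → ℕ) : Prop :=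
  WO r ∧ KK d F r y ρ ∧
  (∀ p : (ℕ → ℕ) × (ℕ → ℕ), KK d F r p.1 p.2 →
    (∀ n, y n = p.1 n ∧ ρ n = p.2 n) ∨ LexLT r y ρ p.1 p.2) ∧
  (∀ p : (ℕ → ℕ) × (ℕ → ℕ), ∀ n, (∀ k, ∃ m, k ≤ m ∧ r m n = true) → KK d F r p.1 p.2 →
    ∃ i a, p.2 i = a ∧ r a n = false)

lemma WO.isWellOrder {r : ℕ → ℕ → Bool} (h : WO r) :
    IsWellOrder ℕ (fun a b => r a b = true) := by
  obtain ⟨⟨h1, h2, h3⟩, h4⟩ := h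
  have wf : WellFounded (fun a b => r a b = true) := by
    rw [wellFounded_iff_isEmpty_descending_chain]
    refine ⟨fun ⟨f, hf⟩ => ?_⟩
    obtain ⟨n, a, b, rfl, rfl, h⟩ := h4 f
    have := hf n
    simp [h] at this
  exact { wf := wf, trichotomous := by
            intro a b hab hba
            rcases h3 a b with h | h | h
            · exact absurd h hab
            · exact h
            · exact absurd h hba
          }

lemma WO.of_isWellOrder {r : ℕ → ℕ → Bool} (h : IsWellOrder ℕ (fun a b => r a b = true)) :
    WO r := by
  refine ⟨⟨?_, ?_, ?_⟩, ?_⟩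
  · intro a
    have := h.toIsWellFounded.wf.irrefl.irrefl a
    simpa using this
  · intro a b c
    exact trans_of (fun a b => r a b = true)
  · intro a b
    exact trichotomous_of (fun a b => r a b = true) a b
  · intro f
    by_contra hcon
    push Not at hcon
    have := wellFounded_iff_isEmpty_descending_chain.1 h.toIsWellFounded.wf
    refine this.false ⟨f, fun n => ?_⟩
    have := hcon n _ _ rfl rfl
    simpa using this

lemma KK.strictMono {d F r y ρ} (h : KK d F r y ρ) : StrictMono y := strictMono_nat_of_lt_succ h.1

lemma KK.homog {d F r y ρ} (h : KK d F r y ρ) (hr : WO r) : Homog (fam F) (Set.range y) := by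
  classical
  rcases h.2.2 with h' | h'
  · right
    intro s hs hF
    have := h' s ((sub_iff _ _).2 hs)
    simp [fam] at hF
    simp [hF] at this
  · left
    intro z hz hzi
    by_contra hcon
    push Not at hcon
    let e : ℕ → ℕ := Nat.nth (· ∈ z)
    have he : StrictMono e := Nat.nth_strictMono hzi
    have hez : ∀ n, e n ∈ z := fun n => Nat.nth_mem_of_infinite hzi n
    let t : ℕ → Finset ℕ := fun n => (Finset.Iic (e n)).filter (· ∈ z)
    have ht : ∀ n a, a ∈ t n ↔ a ≤ e n ∧ a ∈ z := fun n a => by simp [t]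
    have key : ∀ n, r (ρ (Encodable.encode (t (n+1)))) (ρ (Encodable.encode (t n))) = true := by
      intro n
      obtain ⟨a, b, rfl, rfl, hab⟩ := h' (t n) (t (n+1)) (by
        intro a ha
        exact hz ((ht _ _).1 ha).2) ⟨⟨e n, by
          ext a
          have : e n < e (n + 1) := he (Nat.lt_succ_self n)
          simp only [Finset.mem_inter, ht, Finset.mem_Iic]
          constructor
          · rintro ⟨h1, h2⟩
            exact ⟨⟨by omega, h2⟩, h1⟩
          · rintro ⟨⟨_, h2⟩, h1⟩
            exact ⟨h1, h2⟩⟩, by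
          intro heq
          have h1 : e (n+1) ∈ t (n+1) := (ht _ _).2 ⟨le_rfl, hez _⟩
          rw [← heq, ht] at h1
          have : e n < e (n + 1) := he (Nat.lt_succ_self n)
          omega⟩ (by
          rintro u ⟨m, hu⟩
          by_contra hne
          refine hcon u (by simpa [fam] using hne) ⟨min m (e (n+1)), ?_⟩
          ext a
          rw [hu]
          simp only [Finset.coe_inter, Set.mem_inter_iff, Finset.mem_coe, ht, Finset.mem_Iic,
            Set.mem_Iic, le_min_iff]
          tauto)
      exact hab
    obtain ⟨n, a, b, rfl, rfl, hn⟩ := hr.2 (fun n => ρ (Encodable.encode (t n)))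
    have := key n
    simp only [hn] at this
    exact absurd this (by simp)

lemma KK.exists (d : ℕ → ℕ) (hd : StrictMono d) (F : Cantor) : ∃ r y ρ, WO r ∧ KK d F r y ρ := by
  classical
  have hinj : Function.Injective (fun j => d (cde F j)) := fun a b h =>
    (cde_inj F F a b (hd.injective h)).1
  obtain ⟨Y, hYX, hY, hH⟩ := galvin (fam F) _ (Set.infinite_range_of_injective hinj)
  let y : ℕ → ℕ := Nat.nth (· ∈ Y)
  have hy : StrictMono y := Nat.nth_strictMono hY
  have hyr : Set.range y = Y := Nat.range_nth_of_infinite hY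
  have base : (∀ k, y k < y (k + 1)) ∧ (∀ k, ∃ j n, cde F j = n ∧ y k = d n) := by
    refine ⟨fun k => hy (Nat.lt_succ_self k), fun k => ?_⟩
    have : y k ∈ Y := hyr ▸ ⟨k, rfl⟩
    obtain ⟨j, hj⟩ := hYX this
    exact ⟨j, _, rfl, hj.symm⟩
  rcases hH with hH | hH
  swap
  · refine ⟨fun a b => decide (a < b), y, id, WO.of_isWellOrder ?_, base.1, base.2, Or.inl ?_⟩
    · simpa using (inferInstance : IsWellOrder ℕ (· < ·))
    · intro s hs
      have := hH s (hyr ▸ (sub_iff _ _).1 hs)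
      simpa [fam] using this
  let R : ℕ → ℕ → Prop := fun a b => ∃ s t : Finset ℕ, Encodable.encode t = a ∧
    Encodable.encode s = b ∧ SubR t y ∧ EndExt s t ∧
    (∀ u : Finset ℕ, InitSegF u t → F (Encodable.encode u) = false)
  have hR : IsWellFounded ℕ R := by
    constructor
    rw [wellFounded_iff_isEmpty_descending_chain]
    refine ⟨fun ⟨f, hf⟩ => ?_⟩
    choose s t h1 h2 h3 h4 h5 using hf
    have hst : ∀ n, s (n+1) = t n := fun n => by
      have := h2 (n+1)
      rw [← h1 n] at this
      exact Encodable.encode_injective this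
    have hstep : ∀ n, EndExt (t n) (t (n+1)) := fun n => hst n ▸ h4 (n+1)
    -- membership facts
    have hsub : ∀ n, t n ⊆ t (n+1) := fun n => by
      obtain ⟨⟨m, hm⟩, _⟩ := hstep n
      rw [hm]; exact Finset.inter_subset_left
    have hmono : Monotone t := monotone_nat_of_le_succ hsub
    have hnew : ∀ n, ∃ a ∈ t (n+1), a ∉ t n := fun n => by
      by_contra hcon
      push Not at hcon
      exact (hstep n).2 (Finset.Subset.antisymm (hsub n) hcon)
    have hend : ∀ n k, n ≤ k → ∀ a ∈ t k, a ∉ t n → ∀ b ∈ t n, b < a := by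
      intro n k hnk
      induction hnk with
      | refl => intro a ha ha'; exact absurd ha ha'
      | @step k hk ih =>
        intro a ha ha' b hb
        by_cases hak : a ∈ t k
        · exact ih a hak ha' b hb
        · obtain ⟨⟨m, hm⟩, _⟩ := hstep k
          have hb' : b ∈ t k := hmono hk hb
          rw [hm, Finset.mem_inter, Finset.mem_Iic] at hb' hak
          have : ¬ a ≤ m := fun h => hak ⟨ha, h⟩
          omega
    let z : Set ℕ := ⋃ n, (t n : Set ℕ)
    have hz : z ⊆ Y := by
      intro a ha
      obtain ⟨n, hn⟩ := Set.mem_iUnion.1 ha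
      rw [← hyr]
      exact h3 n a hn
    have hcard : ∀ n, n ≤ (t n).card := by
      intro n
      induction n with
      | zero => simp
      | succ n ih =>
        obtain ⟨a, h, h'⟩ := hnew n
        have : (t n).card < (t (n+1)).card :=
          Finset.card_lt_card ⟨hsub n, fun hh => h' (hh h)⟩
        omega
    have hzi : z.Infinite := by
      intro hfin
      have : t (hfin.toFinset.card + 1) ⊆ hfin.toFinset := by
        intro a ha
        rw [Set.Finite.mem_toFinset]
        exact Set.mem_iUnion.2 ⟨_, ha⟩
      have h6 := Finset.card_le_card this
      have h7 := hcard (hfin.toFinset.card + 1)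
      omega
    obtain ⟨u, hu, m, hm⟩ := hH z hz hzi
    -- pick `n` with an element of `t n` above `m`
    obtain ⟨a, ha, ham⟩ := hzi.exists_gt m
    obtain ⟨n, hn⟩ := Set.mem_iUnion.1 ha
    have : InitSegF u (t n) := by
      refine ⟨m, ?_⟩
      ext b
      have hb : b ∈ u ↔ b ∈ z ∧ b ≤ m := by
        rw [← Finset.mem_coe, hm]; simp
      rw [hb, Finset.mem_inter, Finset.mem_Iic]
      constructor
      · rintro ⟨hbz, hbm⟩
        refine ⟨?_, hbm⟩
        by_contra hbn
        obtain ⟨k, hk⟩ := Set.mem_iUnion.1 hbz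
        have := hend n (max n k) (le_max_left _ _) b (hmono (le_max_right n k) hk) hbn a hn
        omega
      · rintro ⟨h, h'⟩
        exact ⟨Set.mem_iUnion.2 ⟨n, h⟩, h'⟩
    have h6 := h5 n u this
    simp [fam] at hu
    simp [hu] at h6
  obtain ⟨S, hRS, hS⟩ := IsWellFounded.exists_well_order_ge R
  refine ⟨fun a b => decide (S a b), y, id, WO.of_isWellOrder (by simpa using hS), base.1, base.2,
    Or.inr ?_⟩
  intro s t h1 h2 h3
  refine ⟨_, _, rfl, rfl, ?_⟩
  simp only [decide_eq_true_eq]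
  exact hRS _ _ ⟨s, t, rfl, rfl, h1, h2, h3⟩

lemma lexmin {β : Type} (lt : β → β → Prop) (wf : WellFounded lt)
    (tri : ∀ a b, lt a b ∨ a = b ∨ lt b a) (S : Set (ℕ → β))
    (hS : ∀ u, (∀ n, ∃ v ∈ S, ∀ m < n, v m = u m) → u ∈ S) (hne : S.Nonempty) :
    ∃ u ∈ S, ∀ v ∈ S, v = u ∨ ∃ n, (∀ m < n, u m = v m) ∧ lt (u n) (v n) := by
  classical
  have step : ∀ (n : ℕ) (v : S), ∃ w : S, (∀ m < n, w.1 m = v.1 m) ∧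
      ∀ x ∈ S, (∀ m < n, x m = v.1 m) → ¬ lt (x n) (w.1 n) := by
    intro n v
    have hne : {b | ∃ x ∈ S, (∀ m < n, x m = v.1 m) ∧ x n = b}.Nonempty :=
      ⟨v.1 n, v.1, v.2, fun _ _ => rfl, rfl⟩
    obtain ⟨b, ⟨w, hw, h1, h2⟩, hmin⟩ := wf.has_min _ hne
    refine ⟨⟨w, hw⟩, h1, ?_⟩
    intro x hx hxv
    change ¬ lt (x n) (w n)
    rw [h2]
    exact hmin _ ⟨x, hx, hxv, rfl⟩
  choose g hg1 hg2 using step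
  obtain ⟨v0, hv0⟩ := hne
  let V : ℕ → S := fun n => Nat.rec ⟨v0, hv0⟩ (fun n v => g n v) n
  have hV : ∀ n, V (n+1) = g n (V n) := fun n => rfl
  have hagree : ∀ k n, n ≤ k → ∀ m < n, (V k).1 m = (V n).1 m := by
    intro k n hnk
    induction hnk with
    | refl => intro m _; rfl
    | @step k hk ih =>
      intro m hm
      rw [hV, hg1 k (V k) m (lt_of_lt_of_le hm hk)]
      exact ih m hm
  let u : ℕ → β := fun n => (V (n+1)).1 n
  have hu : ∀ n, ∀ m < n, (V n).1 m = u m := by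
    intro n m hm
    exact hagree n (m+1) hm m (Nat.lt_succ_self m)
  refine ⟨u, hS u (fun n => ⟨(V n).1, (V n).2, hu n⟩), ?_⟩
  intro v hv
  by_cases hvu : v = u
  · exact Or.inl hvu
  right
  have hex : ∃ n, v n ≠ u n := by
    by_contra hcon
    push Not at hcon
    exact hvu (funext hcon)
  refine ⟨Nat.find hex, ?_, ?_⟩
  · intro m hm
    have := Nat.find_min hex hm
    push Not at this
    exact this.symm
  · set n := Nat.find hex with hn
    have h1 : v n ≠ u n := Nat.find_spec hex
    have h2 : ∀ m < n, v m = (V n).1 m := by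
      intro m hm
      have := Nat.find_min hex hm
      push Not at this
      rw [hu n m hm]; exact this
    have h3 := hg2 n (V n) v hv h2
    rw [← hV] at h3
    rcases tri (u n) (v n) with h | h | h
    · exact h
    · exact absurd h.symm h1
    · exact absurd h h3

lemma KK.transport {d F r r' y ρ} (h : KK d F r y ρ) (f : ℕ → ℕ)
    (hf : ∀ a b, r a b = true → r' (f a) (f b) = true) : KK d F r' y (fun n => f (ρ n)) := by
  refine ⟨h.1, h.2.1, h.2.2.imp id ?_⟩
  intro h' s t h1 h2 h3
  obtain ⟨a, b, rfl, rfl, hab⟩ := h' s t h1 h2 h3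
  exact ⟨_, _, rfl, rfl, hf _ _ hab⟩

lemma KK.closed {d F r y ρ}
    (h : ∀ n : ℕ, ∃ y' ρ', KK d F r y' ρ' ∧ ∀ m < n, y' m = y m ∧ ρ' m = ρ m) : KK d F r y ρ := by
  refine ⟨fun k => ?_, fun k => ?_, ?_⟩
  · obtain ⟨y', ρ', hK, ha⟩ := h (k + 2)
    rw [← (ha k (by omega)).1, ← (ha (k+1) (by omega)).1]
    exact hK.1 k
  · obtain ⟨y', ρ', hK, ha⟩ := h (k + 1)
    rw [← (ha k (by omega)).1]
    exact hK.2.1 k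
  · by_contra hcon
    push Not at hcon
    obtain ⟨⟨s, hs, hsF⟩, s', t, ht, hext, hu, hr⟩ := hcon
    have hs1 : ∃ N, ∀ y' : ℕ → ℕ, (∀ m < N, y' m = y m) → SubR s y' := by
      choose k hk using hs
      refine ⟨(s.attach.sup fun a => k a.1 a.2) + 1, fun y' h a ha => ⟨k a ha, ?_⟩⟩
      rw [h, hk]
      have : k a ha ≤ s.attach.sup fun a => k a.1 a.2 :=
        Finset.le_sup (f := fun a : {x // x ∈ s} => k a.1 a.2) (Finset.mem_attach s ⟨a, ha⟩)
      omega
    have ht1 : ∃ N, ∀ y' : ℕ → ℕ, (∀ m < N, y' m = y m) → SubR t y' := by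
      choose k hk using ht
      refine ⟨(t.attach.sup fun a => k a.1 a.2) + 1, fun y' h a ha => ⟨k a ha, ?_⟩⟩
      rw [h, hk]
      have : k a ha ≤ t.attach.sup fun a => k a.1 a.2 :=
        Finset.le_sup (f := fun a : {x // x ∈ t} => k a.1 a.2) (Finset.mem_attach t ⟨a, ha⟩)
      omega
    obtain ⟨N1, h1⟩ := hs1
    obtain ⟨N2, h2⟩ := ht1
    obtain ⟨y', ρ', hK, ha⟩ := h (N1 + N2 + Encodable.encode t + Encodable.encode s' + 1)
    rcases hK.2.2 with h3 | h3
    · exact hsF (h3 s (h1 y' fun m hm => (ha m (by omega)).1))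
    · obtain ⟨a, b, e1, e2, hab⟩ := h3 s' t (h2 y' fun m hm => (ha m (by omega)).1) hext hu
      rw [(ha _ (by omega)).2] at e1 e2
      exact hr a b e1 e2 hab

lemma Phi.exists (d : ℕ → ℕ) (hd : StrictMono d) (F : Cantor) : ∃ y r ρ, Phi d F y r ρ := by
  classical
  have hne : {o : Ordinal.{0} | ∃ r, ∃ h : WO r, o = @Ordinal.type ℕ _ h.isWellOrder ∧
      ∃ y ρ, KK d F r y ρ}.Nonempty := by
    obtain ⟨r, y, ρ, h, hK⟩ := KK.exists d hd F
    exact ⟨_, r, h, rfl, y, ρ, hK⟩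
  obtain ⟨o, ⟨r, hr, ho, y0, ρ0, hK0⟩, hmin⟩ := Ordinal.lt_wf.has_min _ hne
  have hrw := hr.isWellOrder
  obtain ⟨u, hu, hum⟩ := lexmin
    (fun p q : ℕ × ℕ => p.1 < q.1 ∨ (p.1 = q.1 ∧ r p.2 q.2 = true))
    (by
      have := (Nat.lt_wfRel.wf).prod_lex hrw.toIsWellFounded.wf
      refine Subrelation.wf ?_ this
      rintro ⟨a, b⟩ ⟨a', b'⟩ h
      rw [Prod.lex_def]
      exact h)
    (by
      rintro ⟨a, b⟩ ⟨a', b'⟩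
      rcases lt_trichotomy a a' with h | rfl | h
      · exact Or.inl (Or.inl h)
      · rcases hr.1.2.2 b b' with h | rfl | h
        · exact Or.inl (Or.inr ⟨rfl, h⟩)
        · exact Or.inr (Or.inl rfl)
        · exact Or.inr (Or.inr (Or.inr ⟨rfl, h⟩))
      · exact Or.inr (Or.inr (Or.inl h)))
    {u | KK d F r (fun n => (u n).1) (fun n => (u n).2)}
    (by
      intro u h
      show KK d F r (fun n => (u n).1) (fun n => (u n).2)
      refine KK.closed (fun n => ?_)
      obtain ⟨v, hv, hv'⟩ := h n
      refine ⟨fun n => (v n).1, fun n => (v n).2, hv, fun m hm => ?_⟩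
      rw [← hv' m hm]
      exact ⟨rfl, rfl⟩)
    ⟨fun n => (y0 n, ρ0 n), hK0⟩
  refine ⟨fun n => (u n).1, r, fun n => (u n).2, hr, hu, ?_, ?_⟩
  · rintro ⟨y', ρ'⟩ hK'
    rcases hum (fun n => (y' n, ρ' n)) hK' with h | ⟨n, h1, h2⟩
    · left
      intro n
      rw [← h]
      exact ⟨rfl, rfl⟩
    · right
      refine ⟨n, fun m hm => ?_, ?_⟩
      · have := h1 m hm
        simp [this]
      · rcases h2 with h2 | ⟨h2, h3⟩
        · exact Or.inl h2
        · exact Or.inr ⟨h2, _, _, rfl, rfl, h3⟩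
  · rintro ⟨y', ρ'⟩ n hinf hK'
    by_contra hcon
    push Not at hcon
    have hlt : ∀ i, r (ρ' i) n = true := fun i => by
      have := hcon i _ rfl
      simpa using this
    have hA : {m | r m n = true}.Infinite := by
      rw [Set.infinite_iff_exists_gt]
      intro k
      obtain ⟨m, hm, hm'⟩ := hinf (k + 1)
      exact ⟨m, hm', hm⟩
    have : Infinite {m | r m n = true} := hA.to_subtype
    obtain ⟨e⟩ := nonempty_equiv_of_countable (α := ℕ) (β := {m | r m n = true})
    let r2 : ℕ → ℕ → Bool := fun a b => r (e a) (e b)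
    let emb : (fun a b => r2 a b = true) ↪r (fun a b => r a b = true) :=
      ⟨⟨fun a => (e a : ℕ), fun a b h => e.injective (Subtype.ext h)⟩, Iff.rfl⟩
    have hw2 : IsWellOrder ℕ (fun a b => r2 a b = true) := emb.isWellOrder
    have hr2 : WO r2 := WO.of_isWellOrder hw2
    refine hmin (@Ordinal.type ℕ _ hr2.isWellOrder) ⟨r2, hr2, rfl, y',
      fun i => e.symm ⟨ρ' i, hlt i⟩, ?_⟩ ?_
    · refine ⟨hK'.1, hK'.2.1, hK'.2.2.imp id ?_⟩
      intro h' s t h1 h2 h3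
      obtain ⟨a, b, rfl, rfl, hab⟩ := h' s t h1 h2 h3
      refine ⟨_, _, rfl, rfl, ?_⟩
      simpa [r2] using hab
    · rw [ho]
      refine Ordinal.type_lt_iff.2 ⟨⟨emb, n, ?_⟩⟩
      intro b
      constructor
      · rintro ⟨a, rfl⟩
        exact (e a).2
      · intro hb
        exact ⟨e.symm ⟨b, hb⟩, by
          show (e (e.symm ⟨b, hb⟩) : ℕ) = b
          simp⟩

lemma LexLT.asymm {r y ρ y' ρ'} (hr : WO r) (h : LexLT r y ρ y' ρ') (h' : LexLT r y' ρ' y ρ) :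
    False := by
  obtain ⟨n, h1, h2⟩ := h
  obtain ⟨m, h1', h2'⟩ := h'
  rcases lt_trichotomy n m with hnm | rfl | hnm
  · obtain ⟨e1, e2⟩ := h1' n hnm
    rcases h2 with h2 | ⟨_, a, b, rfl, rfl, h2⟩
    · omega
    · rw [e2, hr.1.1] at h2
      exact absurd h2 (by simp)
  · rcases h2 with h2 | ⟨h2, a, b, rfl, rfl, h3⟩
    · rcases h2' with h2' | ⟨h2', _⟩ <;> omega
    · rcases h2' with h2' | ⟨h2', a, b, rfl, rfl, h3'⟩
      · omega
      · have := hr.1.2.1 _ _ _ h3 h3'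
        rw [hr.1.1] at this
        exact absurd this (by simp)
  · obtain ⟨e1, e2⟩ := h1 m hnm
    rcases h2' with h2 | ⟨_, a, b, rfl, rfl, h2⟩
    · omega
    · rw [e2, hr.1.1] at h2
      exact absurd h2 (by simp)

lemma Phi.unique_aux {d F y r ρ y' r' ρ'} (h : Phi d F y r ρ) (h' : Phi d F y' r' ρ') :
    ¬ @Ordinal.type ℕ _ h.1.isWellOrder < @Ordinal.type ℕ _ h'.1.isWellOrder := by
  intro hlt
  have w1 := h.1.isWellOrder
  have w2 := h'.1.isWellOrder
  obtain ⟨f⟩ := Ordinal.type_lt_iff.1 hlt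
  have hmem : ∀ a, r' (f a) f.top = true := fun a => f.lt_top a
  obtain ⟨i, a, rfl, hi⟩ := h'.2.2.2 (y, fun n => f (ρ n)) f.top (by
      intro k
      have hinf : (Set.range f).Infinite := Set.infinite_range_of_injective f.injective
      obtain ⟨_, ⟨a, rfl⟩, hk⟩ := hinf.exists_gt k
      exact ⟨f a, hk.le, hmem a⟩)
    (h.2.1.transport f fun a b hab => f.map_rel_iff.2 hab)
  simp only [hmem] at hi
  exact absurd hi (by simp)

lemma Phi.unique {d F y r ρ y' r' ρ'} (h : Phi d F y r ρ) (h' : Phi d F y' r' ρ') : y = y' := by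
  have w1 := h.1.isWellOrder
  have w2 := h'.1.isWellOrder
  have heq : @Ordinal.type ℕ _ h.1.isWellOrder = @Ordinal.type ℕ _ h'.1.isWellOrder :=
    le_antisymm (not_lt.1 (Phi.unique_aux h' h)) (not_lt.1 (Phi.unique_aux h h'))
  obtain ⟨f⟩ := Ordinal.type_eq.1 heq
  have hf : ∀ a b, r' (f a) (f b) = true ↔ r a b = true := fun a b => f.map_rel_iff
  have hg : ∀ a b, r' a b = true → r (f.symm a) (f.symm b) = true := fun a b hab => by
    rw [← hf]; simpa using hab
  rcases h'.2.2.1 (y, fun n => f (ρ n)) (h.2.1.transport f fun a b => (hf a b).2) with e | e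
  · exact funext fun n => (e n).1.symm
  rcases h.2.2.1 (y', fun n => f.symm (ρ' n)) (h'.2.1.transport f.symm hg) with e' | e'
  · exact funext fun n => (e' n).1
  exfalso
  refine LexLT.asymm h'.1 e ?_
  obtain ⟨n, h1, h2⟩ := e'
  refine ⟨n, fun m hm => ⟨(h1 m hm).1, ?_⟩, ?_⟩
  · have := (h1 m hm).2
    simp only at this ⊢
    rw [this]; simp
  · rcases h2 with h2 | ⟨h2, a, b, rfl, rfl, h3⟩
    · exact Or.inl h2
    · refine Or.inr ⟨h2, _, _, rfl, rfl, ?_⟩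
      rw [← hf] at h3
      simpa using h3

/-! ### The tree of almost disjoint sets -/

def GG (d : ℕ → ℕ) (F : Cantor) (y : ℕ → ℕ) : Prop := ∃ r ρ, Phi d F y r ρ

inductive Lev : ℕ → (ℕ → ℕ) → Prop
  | zero : Lev 0 id
  | succ (n : ℕ) (d : ℕ → ℕ) (F : Cantor) (y : ℕ → ℕ) : Lev n d → GG d F y → Lev (n + 1) y

lemma GG.strictMono {d F y} (h : GG d F y) : StrictMono y := by
  obtain ⟨r, ρ, h⟩ := h
  exact h.2.1.strictMono

lemma GG.mem {d F y} (h : GG d F y) (k : ℕ) : ∃ j, y k = d (cde F j) := by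
  obtain ⟨r, ρ, h⟩ := h
  obtain ⟨j, n, rfl, hn⟩ := h.2.1.2.1 k
  exact ⟨j, hn⟩

lemma GG.subset {d F y} (h : GG d F y) : Set.range y ⊆ Set.range d := by
  rintro _ ⟨k, rfl⟩
  obtain ⟨j, hj⟩ := h.mem k
  exact ⟨_, hj.symm⟩

lemma Lev.strictMono {n d} (h : Lev n d) : StrictMono d := by
  cases h with
  | zero => exact strictMono_id
  | succ n d F y _ hG => exact hG.strictMono

lemma GG.exists {d} (hd : StrictMono d) (F : Cantor) : ∃ y, GG d F y := by
  obtain ⟨y, r, ρ, h⟩ := Phi.exists d hd F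
  exact ⟨y, r, ρ, h⟩

lemma GG.index_eq {d F F' y y'} (hd : StrictMono d) (h : GG d F y) (h' : GG d F' y')
    (hinf : (Set.range y ∩ Set.range y').Infinite) : F = F' := by
  funext i
  by_contra hne
  refine hinf ?_
  refine ((Set.finite_Iic i).image (fun j => d (cde F j))).subset ?_
  rintro _ ⟨⟨k, rfl⟩, ⟨k', hk'⟩⟩
  obtain ⟨j, hj⟩ := h.mem k
  obtain ⟨j', hj'⟩ := h'.mem k'
  refine ⟨j, ?_, hj.symm⟩
  rw [hj, hj'] at hk'
  obtain ⟨_, h2⟩ := cde_inj F F' j j' (hd.injective hk').symm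
  rw [Set.mem_Iic]
  by_contra hlt
  exact hne (h2 i (by omega))

lemma GG.unique {d F y y'} (h : GG d F y) (h' : GG d F y') : y = y' := by
  obtain ⟨r, ρ, h⟩ := h
  obtain ⟨r', ρ', h'⟩ := h'
  exact h.unique h'

lemma Lev.unique {n} : ∀ {d d'}, Lev n d → Lev n d' →
    (Set.range d ∩ Set.range d').Infinite → d = d' := by
  induction n with
  | zero =>
    intro d d' h h' _
    cases h; cases h'; rfl
  | succ n ih =>
    intro d d' h h' hinf
    cases h with
    | succ n a F _ ha hG =>
    cases h' with
    | succ n a' F' _ ha' hG' =>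
    have e := ih ha ha' (hinf.mono (Set.inter_subset_inter hG.subset hG'.subset))
    subst e
    have e := hG.index_eq ha.strictMono hG' hinf
    subst e
    exact hG.unique hG'

lemma Lev.ancestor {m e} (h : Lev m e) : ∀ k, k ≤ m → ∃ d, Lev k d ∧ Set.range e ⊆ Set.range d := by
  induction h with
  | zero =>
    intro k hk
    obtain rfl : k = 0 := by omega
    exact ⟨id, Lev.zero, subset_rfl⟩
  | succ n d F y hd hG ih =>
    intro k hk
    rcases Nat.lt_or_ge n k with h | h
    · obtain rfl : k = n + 1 := by omega
      exact ⟨y, Lev.succ n d F y hd hG, subset_rfl⟩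
    · obtain ⟨a, ha, ha'⟩ := ih k h
      exact ⟨a, ha, hG.subset.trans ha'⟩

lemma range_inf {d : ℕ → ℕ} (h : StrictMono d) : (Set.range d).Infinite :=
  Set.infinite_range_of_injective h.injective

lemma lev_tall (x : Set ℕ) (hx : x.Infinite) :
    ∃ y, y ⊆ x ∧ y.Infinite ∧ ∀ m e, Lev m e → ¬ Set.range e ⊆ y := by
  by_contra hcon
  push Not at hcon
  have step : ∀ (n : ℕ) (d : {d : ℕ → ℕ // Lev n d ∧ (x ∩ Set.range d).Infinite}),
      ∃ a : {a : ℕ → ℕ // Lev (n + 1) a ∧ (x ∩ Set.range a).Infinite}, ∃ F, GG d.1 F a.1 := by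
    rintro n ⟨d, hd, hinf⟩
    obtain ⟨m, e, he, hsub⟩ := hcon (x ∩ Set.range d) Set.inter_subset_left hinf
    rcases Nat.lt_or_ge n m with h | h
    · obtain ⟨a, ha, hea⟩ := he.ancestor (n+1) h
      have ha2 : (x ∩ Set.range a).Infinite :=
        (range_inf he.strictMono).mono fun b hb => ⟨(hsub hb).1, hea hb⟩
      cases ha with
      | succ _ d' F _ hd' hG =>
      have : d' = d := hd'.unique hd ((range_inf he.strictMono).mono fun b hb =>
        ⟨hG.subset (hea hb), (hsub hb).2⟩)
      subst this
      exact ⟨⟨a, Lev.succ _ _ F _ hd' hG, ha2⟩, F, hG⟩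
    · obtain ⟨e', he', hde'⟩ := hd.ancestor m h
      have : e = e' := he.unique he' ((range_inf he.strictMono).mono fun b hb =>
        ⟨hb, hde' (hsub hb).2⟩)
      subst this
      obtain ⟨a, ha⟩ := GG.exists hd.strictMono (fun _ => true)
      refine ⟨⟨a, Lev.succ _ _ _ _ hd ha, (range_inf ha.strictMono).mono fun b hb => ?_⟩, _, ha⟩
      exact ⟨(hsub (hde' (ha.subset hb))).1, hb⟩
  choose g hg using step
  let D : ∀ n, {d : ℕ → ℕ // Lev n d ∧ (x ∩ Set.range d).Infinite} := fun n =>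
    Nat.rec ⟨id, Lev.zero, by simpa using hx⟩ (fun n d => g n d) n
  have hD : ∀ n, ∃ F, GG (D n).1 F (D (n+1)).1 := fun n => hg n (D n)
  have hDm : ∀ k n, n ≤ k → Set.range (D k).1 ⊆ Set.range (D n).1 := by
    intro k n h
    induction h with
    | refl => exact subset_rfl
    | step h ih =>
      obtain ⟨F, hF⟩ := hD _
      exact hF.subset.trans ih
  have hpick : ∀ n b : ℕ, ∃ c, c ∈ x ∩ Set.range (D n).1 ∧ b < c := fun n b => by
    obtain ⟨c, h1, h2⟩ := (D n).2.2.exists_gt b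
    exact ⟨c, h1, h2⟩
  choose p hp1 hp2 using hpick
  let y : ℕ → ℕ := fun n => Nat.rec (p 0 0) (fun n b => p (n+1) b) n
  have hy : StrictMono y := strictMono_nat_of_lt_succ fun n => hp2 (n+1) (y n)
  have hyx : ∀ n, y n ∈ x ∩ Set.range (D n).1 := by
    intro n
    cases n with
    | zero => exact hp1 0 0
    | succ n => exact hp1 (n+1) (y n)
  obtain ⟨m, e, he, hsub⟩ := hcon (Set.range y) (by
    rintro _ ⟨n, rfl⟩; exact (hyx n).1) (range_inf hy)
  have hfin : ∀ n, (Set.range y \ Set.range (D n).1).Finite := by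
    intro n
    refine ((Set.finite_Iio n).image y).subset ?_
    rintro _ ⟨⟨k, rfl⟩, hk⟩
    refine ⟨k, ?_, rfl⟩
    rw [Set.mem_Iio]
    by_contra hkn
    exact hk (hDm k n (by omega) (hyx k).2)
  have hinter : ∀ n (A : Set ℕ), A.Infinite → A ⊆ Set.range y →
      (A ∩ Set.range (D n).1).Infinite := by
    intro n A hA hAy
    have : A ∩ Set.range (D n).1 = A \ (Set.range y \ Set.range (D n).1) := by
      ext b
      have := @hAy b
      simp only [Set.mem_inter_iff, Set.mem_sdiff]
      tauto
    rw [this]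
    exact hA.sdiff (hfin n)
  have hem : e = (D m).1 := he.unique (D m).2.1 (hinter m _ (range_inf he.strictMono) hsub)
  obtain ⟨F, hF⟩ := hD m
  obtain ⟨a, ha⟩ := GG.exists he.strictMono (fun n => !(F n))
  rw [← hem] at hF
  have := ha.index_eq he.strictMono hF
    (hinter (m+1) _ (range_inf ha.strictMono) (ha.subset.trans hsub))
  have := congrFun this 0
  simp at this

/-- the ideal -/
def theI : Set Cantor := {x | ¬ ∃ m e, Lev m e ∧ Set.range e ⊆ toSet x}

lemma not_mem_theI {x : Cantor} : x ∉ theI ↔ ∃ m e, Lev m e ∧ Set.range e ⊆ toSet x := by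
  simp only [theI, Set.mem_ofPred_eq, not_not]

open Classical in
noncomputable def ofSet (s : Set ℕ) : Cantor := fun n => decide (n ∈ s)

lemma toSet_ofSet (s : Set ℕ) : toSet (ofSet s) = s := by
  ext n; simp [toSet, ofSet]

lemma lev_hom {m e} (h : Lev m e) (F : Set (Finset ℕ)) :
    ∃ a, Lev (m + 1) a ∧ Set.range a ⊆ Set.range e ∧ Homog F (Set.range a) := by
  classical
  let F' : Cantor := fun n => decide (∃ s ∈ F, Encodable.encode s = n)
  have hF : fam F' = F := by
    ext s
    simp [fam, F']
  obtain ⟨a, ha⟩ := GG.exists h.strictMono F'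
  refine ⟨a, Lev.succ _ _ _ _ h ha, ha.subset, ?_⟩
  obtain ⟨r, ρ, hP⟩ := ha
  rw [← hF]
  exact hP.2.1.homog hP.1

lemma theI_hom (x : Cantor) (hx : x ∉ theI) (F : Set (Finset ℕ)) :
    ∃ y : Cantor, toSet y ⊆ toSet x ∧ (toSet y).Infinite ∧ Homog F (toSet y) ∧ y ∉ theI := by
  obtain ⟨m, e, he, hex⟩ := not_mem_theI.1 hx
  obtain ⟨a, ha, hae, hH⟩ := lev_hom he F
  refine ⟨ofSet (Set.range a), ?_, ?_, ?_, not_mem_theI.2 ⟨m + 1, a, ha, ?_⟩⟩ <;>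
    rw [toSet_ofSet]
  · exact hae.trans hex
  · exact range_inf ha.strictMono
  · exact hH

lemma theI_ideal : IsIdeal theI := by
  constructor
  · intro x hx y hyx hy
    obtain ⟨m, e, he, hey⟩ := hy
    exact hx ⟨m, e, he, hey.trans hyx⟩
  · intro x hx y hy
    by_contra hcon
    obtain ⟨m, e, he, hsub⟩ := not_mem_theI.1 hcon
    obtain ⟨a, ha, hae, hH⟩ := lev_hom he {s | ∃ n ∈ toSet x, s = {n}}
    rcases hH with hH | hH
    · refine hx ⟨_, a, ha, ?_⟩
      intro n hn
      obtain ⟨s, ⟨k, hk, rfl⟩, l, hl⟩ := hH (Set.range a \ Set.Iio n) Set.sdiff_subset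
        ((range_inf ha.strictMono).sdiff (Set.finite_Iio n))
      have h1 : k ∈ (Set.range a \ Set.Iio n) ∩ Set.Iic l := by rw [← hl]; simp
      have h2 : ¬ k < n := h1.1.2
      have h3 : k ≤ l := h1.2
      have h4 : n ∈ (Set.range a \ Set.Iio n) ∩ Set.Iic l :=
        ⟨⟨hn, fun h => lt_irrefl n h⟩, by rw [Set.mem_Iic]; omega⟩
      rw [← hl] at h4
      obtain rfl : n = k := by simpa using h4
      exact hk
    · refine hy ⟨_, a, ha, ?_⟩
      intro n hn
      have h1 : n ∉ toSet x := fun h => hH {n} (by simpa using hn) ⟨n, h, rfl⟩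
      have h2 := hsub (hae hn)
      simp only [toSet, Set.mem_ofPred_eq, Bool.or_eq_true] at h1 h2 ⊢
      exact h2.resolve_left h1

lemma theI_tall : Tall theI := by
  intro x hx
  obtain ⟨y, h1, h2, h3⟩ := lev_tall _ hx
  refine ⟨ofSet y, ?_, by rwa [toSet_ofSet], by rwa [toSet_ofSet]⟩
  rintro ⟨m, e, he, hsub⟩
  rw [toSet_ofSet] at hsub
  exact h3 m e he hsub

lemma theI_noclosed (C : Set Cantor) (hCI : C ⊆ theI) (hC : IsClosed C) (hH : Hereditary C) :
    ¬ Tall C := by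
  intro hT
  have h1 : ofSet Set.univ ∉ theI := not_mem_theI.2 ⟨0, id, Lev.zero, by rw [toSet_ofSet]; simp⟩
  obtain ⟨y, _, hyi, hyH, hy⟩ := theI_hom _ h1 {s | ofSet (s : Set ℕ) ∉ C}
  rcases hyH with h | h
  · obtain ⟨z, hzC, hzi, hzy⟩ := hT y hyi
    obtain ⟨s, hs, n, hn⟩ := h _ hzy hzi
    refine hs (hH z hzC _ ?_)
    rw [toSet_ofSet, hn]
    exact Set.inter_subset_left
  · refine hy (hCI ?_)
    have hlim : Filter.Tendsto (fun n => ofSet (toSet y ∩ Set.Iic n)) Filter.atTop (nhds y) := by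
      rw [tendsto_pi_nhds]
      intro k
      refine tendsto_const_nhds.congr' ?_
      filter_upwards [Filter.eventually_ge_atTop k] with n hn
      simp only [ofSet, toSet, Set.mem_inter_iff, Set.mem_ofPred_eq, Set.mem_Iic, hn, and_true]
      simp
    refine hC.mem_of_tendsto hlim (Filter.Eventually.of_forall fun n => ?_)
    have hfin : (toSet y ∩ Set.Iic n).Finite := (Set.finite_Iic n).inter_of_right _
    have := h hfin.toFinset (by simp)
    simpa using this

/-! ### Definability -/

section Definability

open MeasureTheory

def CoA {α : Type} [TopologicalSpace α] (p : α → Prop) : Prop := AnalyticSet {a | ¬ p a}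

section
variable {α : Type} [TopologicalSpace α] [PolishSpace α] [MeasurableSpace α] [BorelSpace α]

lemma CoA.of_meas {p : α → Prop} (h : Measurable p) : CoA p :=
  MeasurableSet.analyticSet (measurableSet_setOfPred.2 h.not)

lemma CoA.all {ι : Type} [Countable ι] {p : ι → α → Prop} (h : ∀ i, CoA (p i)) :
    CoA (fun a => ∀ i, p i a) := by
  have : {a | ¬ ∀ i, p i a} = ⋃ i, {a | ¬ p i a} := by ext; simp
  unfold CoA
  rw [this]
  exact AnalyticSet.iUnion h

lemma CoA.and {p q : α → Prop} (hp : CoA p) (hq : CoA q) : CoA (fun a => p a ∧ q a) := by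
  have : CoA (fun a => ∀ b : Bool, (if b then p else q) a) := CoA.all (by
    intro b; cases b <;> simpa)
  simpa [and_comm] using this

lemma CoA.or {p q : α → Prop} (hp : CoA p) (hq : CoA q) : CoA (fun a => p a ∨ q a) := by
  have h : AnalyticSet (⋂ b : Bool, {a | ¬ (if b then p else q) a}) := AnalyticSet.iInter (by
    intro b; cases b <;> simpa)
  have e : {a | ¬ (p a ∨ q a)} = ⋂ b : Bool, {a | ¬ (if b then p else q) a} := by
    ext; simp [and_comm]
  unfold CoA
  rw [e]; exact h

lemma CoA.forallZ {Z : Type} [TopologicalSpace Z] [PolishSpace Z] [MeasurableSpace Z]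
    [BorelSpace Z] {q : α × Z → Prop} (h : Measurable q) : CoA (fun a => ∀ z, q (a, z)) := by
  have e : {a | ¬ ∀ z, q (a, z)} = Prod.fst '' {p | ¬ q p} := by
    ext a; simp
  unfold CoA
  rw [e]
  exact (CoA.of_meas h).image_of_continuous continuous_fst

end

lemma CoA.comp {α : Type} [TopologicalSpace α] [PolishSpace α] {β : Type} [TopologicalSpace β] [T2Space β] {p : β → Prop} (h : CoA p) {f : α → β}
    (hf : Continuous f) : CoA (fun a => p (f a)) :=
  AnalyticSet.preimage h hf


section
variable {α : Type} [MeasurableSpace α]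

lemma meas_rel {f g : α → ℕ} (R : ℕ → ℕ → Prop) (hf : Measurable f) (hg : Measurable g) :
    Measurable (fun a => R (f a) (g a)) :=
  (Measurable.of_discrete (f := fun p : ℕ × ℕ => R p.1 p.2)).comp (hf.prodMk hg)

lemma meas_eqn {f g : α → ℕ} (hf : Measurable f) (hg : Measurable g) :
    Measurable (fun a => f a = g a) := meas_rel (· = ·) hf hg

lemma meas_ltn {f g : α → ℕ} (hf : Measurable f) (hg : Measurable g) :
    Measurable (fun a => f a < g a) := meas_rel (· < ·) hf hg

lemma meas_ap {β : Type} [MeasurableSpace β] {f : α → ℕ → β} (hf : Measurable f) (k : ℕ) :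
    Measurable (fun a => f a k) := measurable_pi_iff.1 hf k

lemma meas_ap2 {r : α → ℕ → ℕ → Bool} (hf : Measurable r) (k l : ℕ) :
    Measurable (fun a => r a k l) := meas_ap (meas_ap hf k) l

lemma meas_cde {F : α → Cantor} (hF : Measurable F) (k : ℕ) : Measurable (fun a => cde (F a) k) := by
  induction k with
  | zero => exact measurable_const
  | succ k ih =>
    exact (Measurable.of_discrete (f := fun p : ℕ × Bool => Nat.pair p.1 p.2.toNat + 1)).comp
      (ih.prodMk (meas_ap hF k))

lemma meas_SubR {y : α → ℕ → ℕ} (hy : Measurable y) (s : Finset ℕ) :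
    Measurable (fun a => SubR s (y a)) := by
  unfold SubR
  exact Measurable.forall fun b => Measurable.imp measurable_const <|
    Measurable.exists fun k => (meas_ap hy k).eq_const b

lemma meas_KK {d : α → ℕ → ℕ} {F : α → Cantor} {r : α → ℕ → ℕ → Bool} {y ρ : α → ℕ → ℕ}
    (hd : Measurable d) (hF : Measurable F) (hr : Measurable r) (hy : Measurable y)
    (hρ : Measurable ρ) : Measurable (fun a => KK (d a) (F a) (r a) (y a) (ρ a)) := by
  unfold KK
  refine Measurable.and ?_ (Measurable.and ?_ (Measurable.or ?_ ?_))
  · exact Measurable.forall fun k => meas_ltn (meas_ap hy _) (meas_ap hy _)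
  · exact Measurable.forall fun k => Measurable.exists fun j => Measurable.exists fun n =>
      ((meas_cde hF j).eq_const n).and (meas_eqn (meas_ap hy _) (meas_ap hd _))
  · exact Measurable.forall fun s => (meas_SubR hy s).imp ((meas_ap hF _).eq_const _)
  · refine Measurable.forall fun s => Measurable.forall fun t => (meas_SubR hy t).imp ?_
    refine Measurable.imp measurable_const (Measurable.imp ?_ ?_)
    · exact Measurable.forall fun u => Measurable.imp measurable_const ((meas_ap hF _).eq_const _)
    · exact Measurable.exists fun a => Measurable.exists fun b =>
        ((meas_ap hρ _).eq_const a).and (((meas_ap hρ _).eq_const b).and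
          ((meas_ap2 hr a b).eq_const true))

lemma meas_LexLT {r : α → ℕ → ℕ → Bool} {y ρ y' ρ' : α → ℕ → ℕ}
    (hr : Measurable r) (hy : Measurable y) (hρ : Measurable ρ) (hy' : Measurable y')
    (hρ' : Measurable ρ') : Measurable (fun a => LexLT (r a) (y a) (ρ a) (y' a) (ρ' a)) := by
  unfold LexLT
  refine Measurable.exists fun n => Measurable.and ?_ (Measurable.or ?_ (Measurable.and ?_ ?_))
  · exact Measurable.forall fun m => Measurable.imp measurable_const
      ((meas_eqn (meas_ap hy _) (meas_ap hy' _)).and (meas_eqn (meas_ap hρ _) (meas_ap hρ' _)))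
  · exact meas_ltn (meas_ap hy _) (meas_ap hy' _)
  · exact meas_eqn (meas_ap hy _) (meas_ap hy' _)
  · exact Measurable.exists fun a => Measurable.exists fun b =>
        ((meas_ap hρ _).eq_const a).and (((meas_ap hρ' _).eq_const b).and
          ((meas_ap2 hr a b).eq_const true))

lemma meas_LinO {r : α → ℕ → ℕ → Bool} (hr : Measurable r) : Measurable (fun a => LinO (r a)) := by
  unfold LinO
  refine Measurable.and ?_ (Measurable.and ?_ ?_)
  · exact Measurable.forall fun a => (meas_ap2 hr a a).eq_const _
  · exact Measurable.forall fun a => Measurable.forall fun b => Measurable.forall fun c =>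
      ((meas_ap2 hr a b).eq_const _).imp (((meas_ap2 hr b c).eq_const _).imp
        ((meas_ap2 hr a c).eq_const _))
  · exact Measurable.forall fun a => Measurable.forall fun b =>
      ((meas_ap2 hr a b).eq_const _).or (Measurable.or measurable_const
        ((meas_ap2 hr b a).eq_const _))

end

set_option synthInstance.maxSize 4000
set_option synthInstance.maxHeartbeats 400000

instance polish_seq {β : Type} [TopologicalSpace β] [PolishSpace β] : PolishSpace (ℕ → β) where

instance polish_prod {β γ : Type} [TopologicalSpace β] [PolishSpace β] [TopologicalSpace γ]
    [PolishSpace γ] : PolishSpace (β × γ) where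

instance borel_seq {β : Type} [TopologicalSpace β] [PolishSpace β] [MeasurableSpace β]
    [BorelSpace β] : BorelSpace (ℕ → β) := Pi.borelSpace

instance borel_prod {β γ : Type} [TopologicalSpace β] [PolishSpace β] [MeasurableSpace β]
    [BorelSpace β] [TopologicalSpace γ] [PolishSpace γ] [MeasurableSpace γ] [BorelSpace γ] :
    BorelSpace (β × γ) := Prod.borelSpace

abbrev PSp : Type := (ℕ → ℕ) × Cantor × (ℕ → ℕ) × (ℕ → ℕ → Bool) × (ℕ → ℕ)

lemma coA_Phi : CoA (fun p : PSp => Phi p.1 p.2.1 p.2.2.1 p.2.2.2.1 p.2.2.2.2) := by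
  have m1 : Measurable (fun p : PSp => p.1) := by fun_prop
  have m2 : Measurable (fun p : PSp => p.2.1) := by fun_prop
  have m3 : Measurable (fun p : PSp => p.2.2.1) := by fun_prop
  have m4 : Measurable (fun p : PSp => p.2.2.2.1) := by fun_prop
  have m5 : Measurable (fun p : PSp => p.2.2.2.2) := by fun_prop
  unfold Phi WO
  refine CoA.and (CoA.and ?_ ?_) (CoA.and ?_ (CoA.and ?_ ?_))
  · exact CoA.of_meas (meas_LinO m4)
  · refine CoA.forallZ (α := PSp) (Z := ℕ → ℕ) (q := fun x => ∃ n a b, x.2 (n + 1) = a ∧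
      x.2 n = b ∧ x.1.2.2.2.1 a b = false) ?_
    exact Measurable.exists fun n => Measurable.exists fun a => Measurable.exists fun b =>
      ((meas_ap measurable_snd _).eq_const a).and (((meas_ap measurable_snd _).eq_const b).and
        ((meas_ap2 (m4.comp measurable_fst) a b).eq_const _))
  · exact CoA.of_meas (meas_KK m1 m2 m4 m3 m5)
  · refine CoA.forallZ (α := PSp) (Z := (ℕ → ℕ) × (ℕ → ℕ)) (q := fun x =>
      KK x.1.1 x.1.2.1 x.1.2.2.2.1 x.2.1 x.2.2 →
      (∀ n, x.1.2.2.1 n = x.2.1 n ∧ x.1.2.2.2.2 n = x.2.2 n) ∨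
        LexLT x.1.2.2.2.1 x.1.2.2.1 x.1.2.2.2.2 x.2.1 x.2.2) ?_
    have k1 : Measurable (fun x : PSp × ((ℕ → ℕ) × (ℕ → ℕ)) => x.2.1) := by fun_prop
    have k2 : Measurable (fun x : PSp × ((ℕ → ℕ) × (ℕ → ℕ)) => x.2.2) := by fun_prop
    have n1 : Measurable (fun x : PSp × ((ℕ → ℕ) × (ℕ → ℕ)) => x.1.1) := by fun_prop
    have n2 : Measurable (fun x : PSp × ((ℕ → ℕ) × (ℕ → ℕ)) => x.1.2.1) := by fun_prop
    have n3 : Measurable (fun x : PSp × ((ℕ → ℕ) × (ℕ → ℕ)) => x.1.2.2.1) := by fun_prop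
    have n4 : Measurable (fun x : PSp × ((ℕ → ℕ) × (ℕ → ℕ)) => x.1.2.2.2.1) := by fun_prop
    have n5 : Measurable (fun x : PSp × ((ℕ → ℕ) × (ℕ → ℕ)) => x.1.2.2.2.2) := by fun_prop
    exact (meas_KK n1 n2 n4 k1 k2).imp (Measurable.or (Measurable.forall fun n =>
      (meas_eqn (meas_ap n3 n) (meas_ap k1 n)).and (meas_eqn (meas_ap n5 n) (meas_ap k2 n)))
      (meas_LexLT n4 n3 n5 k1 k2))
  · refine CoA.forallZ (α := PSp) (Z := (ℕ → ℕ) × (ℕ → ℕ)) (q := fun x =>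
      ∀ n, (∀ k, ∃ m, k ≤ m ∧ x.1.2.2.2.1 m n = true) →
        KK x.1.1 x.1.2.1 x.1.2.2.2.1 x.2.1 x.2.2 →
        ∃ i a, x.2.2 i = a ∧ x.1.2.2.2.1 a n = false) ?_
    have k1 : Measurable (fun x : PSp × ((ℕ → ℕ) × (ℕ → ℕ)) => x.2.1) := by fun_prop
    have k2 : Measurable (fun x : PSp × ((ℕ → ℕ) × (ℕ → ℕ)) => x.2.2) := by fun_prop
    have n1 : Measurable (fun x : PSp × ((ℕ → ℕ) × (ℕ → ℕ)) => x.1.1) := by fun_prop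
    have n2 : Measurable (fun x : PSp × ((ℕ → ℕ) × (ℕ → ℕ)) => x.1.2.1) := by fun_prop
    have n4 : Measurable (fun x : PSp × ((ℕ → ℕ) × (ℕ → ℕ)) => x.1.2.2.2.1) := by fun_prop
    refine Measurable.forall fun n => Measurable.imp ?_ ((meas_KK n1 n2 n4 k1 k2).imp ?_)
    · exact Measurable.forall fun k => Measurable.exists fun m =>
        Measurable.and measurable_const ((meas_ap2 n4 m n).eq_const _)
    · exact Measurable.exists fun i => Measurable.exists fun a =>
        ((meas_ap k2 i).eq_const a).and ((meas_ap2 n4 a n).eq_const _)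

/-- witnesses: a finite chain in the tree -/
abbrev WSp : Type := ℕ × (ℕ → ℕ → ℕ) × (ℕ → Cantor) × (ℕ → ℕ → ℕ → Bool) × (ℕ → ℕ → ℕ)

def Wit (x : Cantor) (w : WSp) : Prop :=
  (∀ k, w.2.1 0 k = k) ∧
  (∀ i, w.1 ≤ i ∨
    Phi (w.2.1 i) (w.2.2.1 i) (w.2.1 (i + 1)) (w.2.2.2.1 i) (w.2.2.2.2 i)) ∧
  (∀ k, ∃ n v, w.1 = n ∧ w.2.1 n k = v ∧ x v = true)

lemma coA_Wit : CoA (fun p : Cantor × WSp => Wit p.1 p.2) := by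
  unfold Wit
  have m1 : Measurable (fun p : Cantor × WSp => p.2.1) := by fun_prop
  have m2 : Measurable (fun p : Cantor × WSp => p.2.2.1) := by fun_prop
  refine CoA.and ?_ (CoA.and ?_ ?_)
  · exact CoA.of_meas (Measurable.forall fun k => (meas_ap (meas_ap m2 0) k).eq_const k)
  · refine CoA.all fun i => CoA.or ?_ ?_
    · exact CoA.of_meas (meas_rel (fun a _ => a ≤ i) m1 m1)
    · exact CoA.comp (f := fun p : Cantor × WSp => ((p.2.2.1 i, p.2.2.2.1 i, p.2.2.1 (i+1),
        p.2.2.2.2.1 i, p.2.2.2.2.2 i) : PSp)) coA_Phi (by fun_prop)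
  · exact CoA.of_meas (Measurable.forall fun k => Measurable.exists fun n =>
      Measurable.exists fun v => (m1.eq_const n).and
        (((meas_ap (meas_ap m2 n) k).eq_const v).and ((meas_ap measurable_fst v).eq_const true)))

lemma Lev.chain {n e} (h : Lev n e) : ∃ (d : ℕ → ℕ → ℕ) (F : ℕ → Cantor)
    (r : ℕ → ℕ → ℕ → Bool) (ρ : ℕ → ℕ → ℕ), d 0 = id ∧ d n = e ∧
    ∀ i < n, Phi (d i) (F i) (d (i+1)) (r i) (ρ i) := by
  induction h with
  | zero => exact ⟨fun _ => id, fun _ _ => true, fun _ _ _ => true, fun _ => id, rfl, rfl,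
      fun i hi => absurd hi (by omega)⟩
  | succ n d0 F0 y _ hG ih =>
    obtain ⟨d, F, r, ρ, h0, hn, hi⟩ := ih
    obtain ⟨r0, ρ0, hP⟩ := hG
    refine ⟨Function.update d (n+1) y, Function.update F n F0, Function.update r n r0,
      Function.update ρ n ρ0, ?_, ?_, ?_⟩
    · rw [Function.update_of_ne (by omega), h0]
    · simp
    · intro i hin
      rcases Nat.lt_succ_iff_lt_or_eq.1 hin with h | rfl
      · rw [Function.update_of_ne (by omega), Function.update_of_ne (by omega),
          Function.update_of_ne (by omega), Function.update_of_ne (by omega),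
          Function.update_of_ne (by omega)]
        exact hi i h
      · rw [Function.update_of_ne (by omega)]
        simp only [Function.update_self]
        rw [hn]
        exact hP

lemma wit_iff (x : Cantor) : (∃ w, Wit x w) ↔ x ∉ theI := by
  rw [not_mem_theI]
  constructor
  · rintro ⟨⟨n, d, F, r, ρ⟩, h0, h1, h2⟩
    simp only at h0 h1 h2
    have hl : ∀ i, i ≤ n → Lev i (d i) := by
      intro i
      induction i with
      | zero =>
        intro _
        have : d 0 = id := funext h0
        rw [this]
        exact Lev.zero
      | succ i ih =>
        intro hi
        exact Lev.succ _ _ _ _ (ih (by omega)) ⟨_, _, (h1 i).resolve_left (by omega)⟩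
    refine ⟨n, d n, hl n le_rfl, ?_⟩
    rintro _ ⟨k, rfl⟩
    obtain ⟨n', v, rfl, rfl, h⟩ := h2 k
    exact h
  · rintro ⟨n, e, he, hex⟩
    obtain ⟨d, F, r, ρ, h0, hn, hi⟩ := he.chain
    refine ⟨⟨n, d, F, r, ρ⟩, fun k => ?_, fun i => ?_, fun k => ⟨n, _, rfl, rfl, ?_⟩⟩
    · simp [h0]
    · rcases Nat.lt_or_ge i n with h | h
      · exact Or.inr (hi i h)
      · exact Or.inl h
    · rw [← hn] at hex
      exact hex ⟨k, rfl⟩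

lemma theI_pi12 : Pi12 theI := by
  have : Nonempty WSp := ⟨(0, fun _ => id, fun _ _ => true, fun _ _ _ => true, fun _ => id)⟩
  obtain ⟨g, hg, hs⟩ := PolishSpace.exists_nat_nat_continuous_surjective WSp
  refine ⟨{p | Wit p.1 (g p.2)}, ?_, ?_⟩
  · exact CoA.comp (f := fun p : Cantor × (ℕ → ℕ) => (p.1, g p.2)) coA_Wit (by fun_prop)
  · ext x
    rw [Set.mem_compl_iff, ← wit_iff]
    exact (hs.exists (p := fun w => Wit x w))

end Definability

/-- There is a tall `Π¹₂` ideal `I` on `ℕ` such that for every `x ∈ I⁺` and every family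
`F` of finite subsets of `ℕ` there is an infinite `F`-homogeneous `y ⊆ x` with `y ∈ I⁺`;
in particular, `I` contains no closed hereditary tall subset of `2^ℕ`. -/
theorem pi12_tall_ideal_no_closed_tall :
    ∃ I : Set Cantor, IsIdeal I ∧ Tall I ∧ Pi12 I ∧
      (∀ x : Cantor, x ∉ I → ∀ F : Set (Finset ℕ),
        ∃ y : Cantor, toSet y ⊆ toSet x ∧ (toSet y).Infinite ∧
          Homog F (toSet y) ∧ y ∉ I) ∧
      (∀ C : Set Cantor, C ⊆ I → IsClosed C → Hereditary C → ¬ Tall C) := by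
  exact ⟨theI, theI_ideal, theI_tall, theI_pi12, theI_hom, theI_noclosed⟩
end
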